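/- Let Q(x,y) = ax² + bxy + cy² be a primitive positive definite integral binary quadratic form, and let ℓ ≥ 5 be prime. Then there exist integers x, y such that every prime p dividing Q(x,y) satisfies p ≢ 0 mod ℓ and p ≢ -1 mod ℓ. -/

import Mathlib

/-!
Let `D = b² - 4ac` and let `m` be a multiple of `D ℓ`. A form with leading coefficient `a` coprime
to `m` corresponds to the invertible ideal `A = (a, ω)` of the order of discriminant `D`. If `I` is
an ideal of norm coprime to `m` in the class inverse to that of `A`, then `I A = (α)` and
`N(α) = a Q(x, y)`, so that `Q` represents `N(I)`. It remains to find, in every class, an ideal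
whose norm has no prime divisor `p ≡ -1` modulo `ℓ`.

The classes of such ideals form a subgroup. If it were proper, some nontrivial character `χ` of the
finite class group would be trivial on it. Comparing lattice sums, `L(s, 1)` is of order `1/(s - 1)`
as `s → 1⁺` while `L(s, χ)` stays bounded, so `log L(s, 1) - log |L(s, χ)|` is at least
`log (1/(s - 1)) - O(1)`. By the Euler products over the rational primes this difference is, up to
`O(1)`, a sum of terms `(1 - χ(I)) p^{-s}` over the ideals `I` of prime norm `p`. Only `p ≡ -1`
modulo `ℓ` contribute, each with at most two ideals and `|1 - χ| ≤ 2`; and the primes `p ≡ -1`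
modulo `4 |D| ℓ` do not contribute because they are inert. Dirichlet's theorem on the density of
primes in progressions therefore bounds the difference by
`(4/φ(ℓ) - 4/φ(4 |D| ℓ)) log (1/(s - 1)) + O(1)`, which is a contradiction as soon as `φ(ℓ) ≥ 4`.
-/

open Filter Topology Asymptotics

/-! ### Primes in residue classes -/

theorem isBigO_one_nhdsGT_of_norm_hasDerivAt_le {E : Type*} [NormedAddCommGroup E]
    [NormedSpace ℝ E] {f f' : ℝ → E} {a b C : ℝ} (hab : a < b)
    (hf : ∀ x ∈ Set.Ioc a b, HasDerivAt f (f' x) x) (hC : ∀ x ∈ Set.Ioc a b, ‖f' x‖ ≤ C) :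
    f =O[𝓝[>] a] (1 : ℝ → ℝ) := by
  have hb : b ∈ Set.Ioc a b := ⟨hab, le_rfl⟩
  have hC0 : 0 ≤ C := (norm_nonneg _).trans (hC b hb)
  refine IsBigO.of_bound (C * (b - a) + ‖f b‖) ?_
  filter_upwards [Ioc_mem_nhdsGT hab] with x hx
  have hmean : ‖f x - f b‖ ≤ C * ‖x - b‖ :=
    (convex_Ioc a b).norm_image_sub_le_of_norm_hasDerivWithin_le
      (fun y hy ↦ (hf y hy).hasDerivWithinAt) hC hb hx
  have hdist : ‖x - b‖ ≤ b - a := by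
    rw [Real.norm_eq_abs, abs_le]
    constructor <;> linarith [hx.1, hx.2]
  calc ‖f x‖ ≤ ‖f x - f b‖ + ‖f b‖ := by simpa using norm_add_le (f x - f b) (f b)
    _ ≤ (C * (b - a) + ‖f b‖) * ‖(1 : ℝ → ℝ) x‖ := by
      rw [Pi.one_apply, norm_one, mul_one]
      gcongr
      exact hmean.trans (by gcongr)

/-- The sum of `p ^ (-s)` over the primes `p` in the residue class `a` modulo `q`. -/
noncomputable def primeResidueSum {q : ℕ} (a : ZMod q) (s : ℝ) : ℝ :=
  ∑' p : Nat.Primes, if (p : ZMod q) = a then (p : ℝ) ^ (-s) else 0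

theorem summable_primes_ite_rpow_neg {q : ℕ} (a : ZMod q) {s : ℝ} (hs : 1 < s) :
    Summable fun p : Nat.Primes ↦ if (p : ZMod q) = a then (p : ℝ) ^ (-s) else 0 := by
  refine Summable.of_nonneg_of_le (fun p ↦ ?_) (fun p ↦ ?_)
    (Nat.Primes.summable_rpow.2 (neg_lt_neg hs))
  all_goals split_ifs
  all_goals first | exact le_rfl | positivity

namespace primeResidueSum

open ArithmeticFunction.vonMangoldt

/-- The indicator function of the primes in a residue class, as the coefficient sequence of an
`L`-series. -/
noncomputable def coeff {q : ℕ} (a : ZMod q) : ℕ → ℂ :=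
  {p : ℕ | p.Prime ∧ (p : ZMod q) = a}.indicator 1

/-- The von Mangoldt function on the elements of a residue class that are not prime. -/
noncomputable def nonPrimePart {q : ℕ} (a : ZMod q) (n : ℕ) : ℝ :=
  if n.Prime then 0 else residueClass a n

variable {q : ℕ} (a : ZMod q)

theorem abscissaOfAbsConv_coeff_le_one : LSeries.abscissaOfAbsConv (coeff a) ≤ 1 :=
  LSeries.abscissaOfAbsConv_le_of_le_const ⟨1, fun n _ ↦ by
    by_cases h : n ∈ {p : ℕ | p.Prime ∧ (p : ZMod q) = a} <;> simp [coeff, h]⟩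

theorem abscissaOfAbsConv_coeff_lt {x : ℝ} (hx : 1 < x) :
    LSeries.abscissaOfAbsConv (coeff a) < (x : ℂ).re :=
  (abscissaOfAbsConv_coeff_le_one a).trans_lt (by rw [Complex.ofReal_re]; exact_mod_cast hx)

theorem logMul_coeff :
    LSeries.logMul (coeff a) =
      (fun n ↦ (residueClass a n : ℂ)) - fun n ↦ (nonPrimePart a n : ℂ) := by
  ext n
  by_cases hp : n.Prime <;> by_cases hm : (n : ZMod q) = a <;>
    simp [LSeries.logMul, coeff, nonPrimePart, hp, hm, residueClass, Set.indicator,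
      ArithmeticFunction.vonMangoldt_apply_prime]

theorem nonPrimePart_nonneg (n : ℕ) : 0 ≤ nonPrimePart a n := by
  rw [nonPrimePart]
  split_ifs
  exacts [le_rfl, residueClass_nonneg a n]

theorem norm_term_nonPrimePart_le {x : ℝ} (hx : 1 < x) (n : ℕ) :
    ‖LSeries.term (fun n ↦ (nonPrimePart a n : ℂ)) x n‖ ≤ nonPrimePart a n / n := by
  rcases n.eq_zero_or_pos with rfl | hn
  · simp
  · have hn1 : (1 : ℝ) ≤ n := by exact_mod_cast hn
    rw [LSeries.norm_term_eq, if_neg hn.ne', Complex.norm_real,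
      Real.norm_of_nonneg (nonPrimePart_nonneg a n), Complex.ofReal_re]
    exact div_le_div_of_nonneg_left (nonPrimePart_nonneg a n) (by positivity)
      (by simpa using Real.rpow_le_rpow_of_exponent_le hn1 hx.le)

theorem LSeriesSummable_nonPrimePart {x : ℝ} (hx : 1 < x) :
    LSeriesSummable (fun n ↦ (nonPrimePart a n : ℂ)) x :=
  Summable.of_norm_bounded (summable_residueClass_non_primes_div a)
    (norm_term_nonPrimePart_le a hx)

theorem norm_LSeries_nonPrimePart_le {x : ℝ} (hx : 1 < x) :
    ‖LSeries (fun n ↦ (nonPrimePart a n : ℂ)) x‖ ≤ ∑' n : ℕ, nonPrimePart a n / n :=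
  tsum_of_norm_bounded (summable_residueClass_non_primes_div a).hasSum
    (norm_term_nonPrimePart_le a hx)

theorem re_LSeries_coeff {x : ℝ} (hx : 1 < x) :
    (LSeries (coeff a) x).re = primeResidueSum a x := by
  have hsupp : (Function.support fun n : ℕ ↦ (LSeries.term (coeff a) x n).re) ⊆
      {p : ℕ | p.Prime} := fun n hn ↦ by
    by_contra hp
    exact hn (by simp [LSeries.term, coeff, Set.indicator, show ¬ n.Prime from hp])
  rw [LSeries, Complex.re_tsum
    (LSeriesSummable_of_abscissaOfAbsConv_lt_re (abscissaOfAbsConv_coeff_lt a hx)),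
    ← tsum_subtype_eq_of_support_subset hsupp]
  refine tsum_congr fun p : Nat.Primes ↦ ?_
  rw [LSeries.term_of_ne_zero p.2.ne_zero, coeff, Set.indicator_apply]
  by_cases hp : (p : ZMod q) = a
  · rw [if_pos ⟨p.2, hp⟩, if_pos hp, Pi.one_apply, ← Complex.ofReal_natCast,
      ← Complex.ofReal_cpow (Nat.cast_nonneg _), ← Complex.ofReal_one, ← Complex.ofReal_div,
      Complex.ofReal_re, Real.rpow_neg (Nat.cast_nonneg _), one_div]
  · rw [if_neg fun h ↦ hp h.2, if_neg hp, zero_div, Complex.zero_re]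

variable [NeZero q]

variable {a} in
theorem LSeries_logMul_coeff (ha : IsUnit a) {x : ℝ} (hx : 1 < x) :
    LSeries (LSeries.logMul (coeff a)) x =
      LFunctionResidueClassAux a x + ((q.totient : ℝ)⁻¹ * (x - 1)⁻¹ : ℝ) -
        LSeries (fun n ↦ (nonPrimePart a n : ℂ)) x := by
  have hres : LSeriesSummable (fun n ↦ (residueClass a n : ℂ)) x :=
    LSeriesSummable_of_abscissaOfAbsConv_lt_re <|
      (abscissaOfAbsConv_residueClass_le_one a).trans_lt
        (by rw [Complex.ofReal_re]; exact_mod_cast hx)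
  rw [logMul_coeff, LSeries_sub hres (LSeriesSummable_nonPrimePart a hx),
    eqOn_LFunctionResidueClassAux ha (by simpa using hx)]
  push_cast
  ring

theorem exists_norm_LFunctionResidueClassAux_le :
    ∃ C : ℝ, ∀ x ∈ Set.Ioc (1 : ℝ) 2, ‖LFunctionResidueClassAux a (x : ℂ)‖ ≤ C := by
  have hcont : ContinuousOn (fun x : ℝ ↦ LFunctionResidueClassAux a (x : ℂ)) (Set.Icc 1 2) :=
    (continuousOn_LFunctionResidueClassAux a).comp Complex.continuous_ofReal.continuousOn
      fun x hx ↦ by simpa using hx.1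
  obtain ⟨C, hC⟩ := isCompact_Icc.exists_bound_of_continuousOn hcont
  exact ⟨C, fun x hx ↦ hC x (Set.Ioc_subset_Icc_self hx)⟩

variable {a} in
/-- The derivative of `∑ p ^ (-s)` is `-∑ (log p) p ^ (-s)`, which by Dirichlet's theorem is
`-1 / (φ(q) (s - 1))` up to a bounded error; the estimate follows by integration. -/
theorem add_log_isBigO_one (ha : IsUnit a) :
    (fun s ↦ primeResidueSum a s + (q.totient : ℝ)⁻¹ * Real.log (s - 1)) =O[𝓝[>] 1]
      (1 : ℝ → ℝ) := by
  obtain ⟨C, hC⟩ := exists_norm_LFunctionResidueClassAux_le a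
  have hderiv : ∀ x ∈ Set.Ioc (1 : ℝ) 2,
      HasDerivAt (fun y : ℝ ↦ (LSeries (coeff a) y).re + (q.totient : ℝ)⁻¹ * Real.log (y - 1))
        ((-LSeries (LSeries.logMul (coeff a)) x).re + (q.totient : ℝ)⁻¹ * (x - 1)⁻¹) x := by
    intro x hx
    refine (LSeries_hasDerivAt (abscissaOfAbsConv_coeff_lt a hx.1)).real_of_complex.add
      (HasDerivAt.const_mul _ ?_)
    simpa using ((hasDerivAt_id x).sub_const 1).log (sub_pos.mpr hx.1).ne'
  have hbound : ∀ x ∈ Set.Ioc (1 : ℝ) 2,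
      ‖(-LSeries (LSeries.logMul (coeff a)) x).re + (q.totient : ℝ)⁻¹ * (x - 1)⁻¹‖ ≤
        ∑' n : ℕ, nonPrimePart a n / n + C := by
    intro x hx
    have hre : (-LSeries (LSeries.logMul (coeff a)) x).re + (q.totient : ℝ)⁻¹ * (x - 1)⁻¹ =
        (LSeries (fun n ↦ (nonPrimePart a n : ℂ)) x - LFunctionResidueClassAux a x).re := by
      rw [LSeries_logMul_coeff ha hx.1]
      simp only [Complex.neg_re, Complex.sub_re, Complex.add_re, Complex.ofReal_re]
      ring
    rw [hre, Real.norm_eq_abs]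
    exact (Complex.abs_re_le_norm _).trans <| (norm_sub_le _ _).trans <|
      add_le_add (norm_LSeries_nonPrimePart_le a hx.1) (hC x hx)
  refine (isBigO_one_nhdsGT_of_norm_hasDerivAt_le one_lt_two hderiv hbound).congr' ?_ .rfl
  filter_upwards [self_mem_nhdsWithin] with s hs
  rw [re_LSeries_coeff a hs]

end primeResidueSum

/-! ### Sums of powers of the norm over a quadratic order -/

theorem isTheta_tsum_one_div_nat_rpow_two_mul_sub_one :
    (fun s : ℝ ↦ ∑' n : ℕ, 1 / (n : ℝ) ^ (2 * s - 1)) =Θ[𝓝[>] 1] fun s ↦ (s - 1)⁻¹ := by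
  have hcomp : Tendsto (fun s : ℝ ↦ 2 * s - 1) (𝓝[>] 1) (𝓝[>] 1) := by
    refine tendsto_nhdsWithin_iff.2 ⟨?_, ?_⟩
    · exact (Continuous.tendsto' (by fun_prop) _ _ (by norm_num)).mono_left nhdsWithin_le_nhds
    · filter_upwards [self_mem_nhdsWithin] with s hs
      rw [Set.mem_Ioi] at hs ⊢
      linarith
  have hlim : Tendsto (fun s : ℝ ↦ (∑' n : ℕ, 1 / (n : ℝ) ^ (2 * s - 1)) / (s - 1)⁻¹)
      (𝓝[>] 1) (𝓝 (1 / 2)) := by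
    refine ((tendsto_sub_mul_tsum_nat_rpow.comp hcomp).div_const 2).congr fun s ↦ ?_
    rw [Function.comp_apply, div_inv_eq_mul]
    ring
  exact (isTheta_of_div_tendsto_nhds_ne_zero hlim (by norm_num)).symm

theorem abs_rpow_neg_sub_rpow_neg_le {x y s : ℝ} (hx : 1 ≤ x) (hy : 1 ≤ y) (hs : 1 ≤ s) :
    |x ^ (-s) - y ^ (-s)| ≤ s * |x - y| / (x * y) := by
  wlog hxy : x ≤ y generalizing x y
  · rw [abs_sub_comm, abs_sub_comm x y, mul_comm x y]
    exact this hy hx (le_of_not_ge hxy)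
  have hx0 : 0 < x := by linarith
  have hy0 : 0 < y := by linarith
  have hbernoulli : 1 - (x / y) ^ s ≤ s * (1 - x / y) := by
    have := one_add_mul_self_le_rpow_one_add (s := x / y - 1) (p := s)
      (by linarith [div_nonneg hx0.le hy0.le]) hs
    rw [add_sub_cancel] at this
    linarith
  have hfactor : y ^ (-s) = x ^ (-s) * (x / y) ^ s := by
    rw [Real.div_rpow hx0.le hy0.le, Real.rpow_neg hy0.le, Real.rpow_neg hx0.le]
    field_simp
  have hanti : y ^ (-s) ≤ x ^ (-s) := Real.rpow_le_rpow_of_nonpos hx0 hxy (by linarith)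
  have hinv : x ^ (-s) ≤ x⁻¹ := by
    rw [← Real.rpow_neg_one]
    exact Real.rpow_le_rpow_of_exponent_le hx (by linarith)
  have hquot : 0 ≤ 1 - x / y := sub_nonneg.2 ((div_le_one hy0).2 hxy)
  rw [abs_of_nonneg (sub_nonneg.2 hanti), abs_of_nonpos (sub_nonpos.2 hxy), hfactor]
  calc x ^ (-s) - x ^ (-s) * (x / y) ^ s = x ^ (-s) * (1 - (x / y) ^ s) := by ring
    _ ≤ x ^ (-s) * (s * (1 - x / y)) := by gcongr
    _ ≤ x⁻¹ * (s * (1 - x / y)) := by gcongr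
    _ = s * -(x - y) / (x * y) := by field_simp; ring

/-- The quadratic order `ℤ[ω]` with `ω ^ 2 = u + b ω`, of discriminant `b ^ 2 + 4 u`. It is not
assumed to be maximal. -/
abbrev QuadraticOrder (u b : ℤ) : Type := QuadraticAlgebra ℤ u b

namespace QuadraticOrder

variable {u b : ℤ}

/-- The sup-norm of the coordinates with respect to `1, ω`. -/
def height (z : QuadraticOrder u b) : ℕ := max z.re.natAbs z.im.natAbs

theorem abs_re_le_height (z : QuadraticOrder u b) : |z.re| ≤ z.height := by
  rw [Int.abs_eq_natAbs, height]
  exact_mod_cast le_max_left _ _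

theorem abs_im_le_height (z : QuadraticOrder u b) : |z.im| ≤ z.height := by
  rw [Int.abs_eq_natAbs, height]
  exact_mod_cast le_max_right _ _

theorem height_eq_zero {z : QuadraticOrder u b} : z.height = 0 ↔ z = 0 := by
  simp [height, QuadraticAlgebra.ext_iff]

theorem height_add_le (z w : QuadraticOrder u b) : (z + w).height ≤ z.height + w.height := by
  simp only [height, QuadraticAlgebra.re_add, QuadraticAlgebra.im_add]
  omega

theorem height_neg (z : QuadraticOrder u b) : (-z).height = z.height := by
  simp [height]

variable (u b) in
/-- The elements of given height, as the lattice points on the boundary of a square. -/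
def heightFiberEquivBox (n : ℕ) :
    {z : QuadraticOrder u b // z.height = n} ≃ (Finset.box n : Finset (ℤ × ℤ)) :=
  (QuadraticAlgebra.equivProd u b).subtypeEquiv fun z ↦ by rw [Int.mem_box]; rfl

instance finite_height_eq (n : ℕ) : Finite {z : QuadraticOrder u b // z.height = n} :=
  Finite.of_equiv _ (heightFiberEquivBox u b n).symm

theorem card_height_eq_zero : Nat.card {z : QuadraticOrder u b // z.height = 0} = 1 := by
  simp [Nat.card_congr (heightFiberEquivBox u b 0)]

theorem card_height_eq {n : ℕ} (hn : n ≠ 0) :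
    Nat.card {z : QuadraticOrder u b // z.height = n} = 8 * n := by
  rw [Nat.card_congr (heightFiberEquivBox u b n), Nat.card_eq_fintype_card, Fintype.card_coe,
    Int.card_box hn]

theorem card_height_eq_le (n : ℕ) :
    Nat.card {z : QuadraticOrder u b // z.height = n} ≤ 8 * (n + 1) := by
  rcases eq_or_ne n 0 with rfl | hn
  · simp [card_height_eq_zero]
  · rw [card_height_eq hn]; omega

theorem succ_le_card_height_eq (n : ℕ) :
    n + 1 ≤ Nat.card {z : QuadraticOrder u b // z.height = n} := by
  rcases eq_or_ne n 0 with rfl | hn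
  · simp [card_height_eq_zero]
  · rw [card_height_eq hn]; omega

variable (u b) in
theorem tsum_height_fiber (f : ℕ → ℝ) (n : ℕ) :
    ∑' z : {z : QuadraticOrder u b // z.height = n}, f z.1.height =
      Nat.card {z : QuadraticOrder u b // z.height = n} * f n := by
  rw [tsum_congr fun z ↦ congrArg f z.2, tsum_const, nsmul_eq_mul]

theorem summable_card_height_mul {f : ℕ → ℝ} (hf : ∀ n, 0 ≤ f n)
    (hs : Summable fun n : ℕ ↦ ((n : ℝ) + 1) * f n) :
    Summable fun n ↦ (Nat.card {z : QuadraticOrder u b // z.height = n} : ℝ) * f n :=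
  Summable.of_nonneg_of_le (fun n ↦ mul_nonneg (by positivity) (hf n))
    (fun n ↦ mul_le_mul_of_nonneg_right (by exact_mod_cast card_height_eq_le n) (hf n))
    ((hs.mul_left 8).congr fun n ↦ (mul_assoc _ _ _).symm)

theorem summable_comp_height {f : ℕ → ℝ} (hf : ∀ n, 0 ≤ f n)
    (hs : Summable fun n : ℕ ↦ ((n : ℝ) + 1) * f n) :
    Summable fun z : QuadraticOrder u b ↦ f z.height := by
  rw [← (Equiv.sigmaFiberEquiv (height : QuadraticOrder u b → ℕ)).summable_iff]
  refine (summable_sigma_of_nonneg fun _ ↦ hf _).2 ⟨fun n ↦ Summable.of_finite, ?_⟩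
  exact (summable_card_height_mul hf hs).congr fun n ↦ (tsum_height_fiber u b f n).symm

theorem tsum_comp_height {f : ℕ → ℝ} (hf : ∀ n, 0 ≤ f n)
    (hs : Summable fun n : ℕ ↦ ((n : ℝ) + 1) * f n) :
    ∑' z : QuadraticOrder u b, f z.height =
      ∑' n, Nat.card {z : QuadraticOrder u b // z.height = n} * f n := by
  let e := Equiv.sigmaFiberEquiv (height : QuadraticOrder u b → ℕ)
  have hsigma : Summable fun x : Σ n, {z : QuadraticOrder u b // z.height = n} ↦
      f x.2.1.height :=
    (e.summable_iff (f := fun z : QuadraticOrder u b ↦ f z.height)).2 (summable_comp_height hf hs)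
  calc ∑' z : QuadraticOrder u b, f z.height
      = ∑' x : Σ n, {z : QuadraticOrder u b // z.height = n}, f x.2.1.height :=
        (e.tsum_eq fun z : QuadraticOrder u b ↦ f z.height).symm
    _ = ∑' n, ∑' z : {z : QuadraticOrder u b // z.height = n}, f z.1.height := hsigma.tsum_sigma
    _ = _ := tsum_congr fun n ↦ tsum_height_fiber u b f n

theorem add_one_mul_add_one_rpow_neg {k : ℝ} (hk : 2 < k) (n : ℕ) :
    ((n : ℝ) + 1) * ((n : ℝ) + 1) ^ (-k) = 1 / ((n + 1 : ℕ) : ℝ) ^ (k - 1) := by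
  rw [← Real.rpow_one_add' (by positivity) (by linarith), one_div, ← Real.rpow_neg (by positivity)]
  push_cast
  ring_nf

theorem summable_add_one_mul_add_one_rpow_neg {k : ℝ} (hk : 2 < k) :
    Summable fun n : ℕ ↦ ((n : ℝ) + 1) * ((n : ℝ) + 1) ^ (-k) :=
  ((summable_nat_add_iff 1).2 (Real.summable_one_div_nat_rpow.2 (by linarith))).congr
    fun n ↦ (add_one_mul_add_one_rpow_neg hk n).symm

theorem tsum_add_one_mul_add_one_rpow_neg {k : ℝ} (hk : 2 < k) :
    ∑' n : ℕ, ((n : ℝ) + 1) * ((n : ℝ) + 1) ^ (-k) = ∑' n : ℕ, 1 / (n : ℝ) ^ (k - 1) := by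
  rw [(Real.summable_one_div_nat_rpow.2 (by linarith : 1 < k - 1)).tsum_eq_zero_add,
    tsum_congr (add_one_mul_add_one_rpow_neg hk), Nat.cast_zero, Real.zero_rpow (by linarith),
    div_zero, zero_add]

theorem summable_height_rpow {k : ℝ} (hk : 2 < k) :
    Summable fun z : QuadraticOrder u b ↦ ((z.height : ℝ) + 1) ^ (-k) :=
  summable_comp_height (f := fun n ↦ ((n : ℝ) + 1) ^ (-k)) (fun n ↦ by positivity)
    (summable_add_one_mul_add_one_rpow_neg hk)

theorem tsum_height_rpow {k : ℝ} (hk : 2 < k) :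
    ∑' z : QuadraticOrder u b, ((z.height : ℝ) + 1) ^ (-k) =
      ∑' n : ℕ, Nat.card {z : QuadraticOrder u b // z.height = n} * ((n : ℝ) + 1) ^ (-k) :=
  tsum_comp_height (f := fun n ↦ ((n : ℝ) + 1) ^ (-k)) (fun n ↦ by positivity)
    (summable_add_one_mul_add_one_rpow_neg hk)

theorem tsum_height_rpow_le {k : ℝ} (hk : 2 < k) :
    ∑' z : QuadraticOrder u b, ((z.height : ℝ) + 1) ^ (-k) ≤
      8 * ∑' n : ℕ, 1 / (n : ℝ) ^ (k - 1) := by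
  have hs := summable_add_one_mul_add_one_rpow_neg hk
  rw [tsum_height_rpow hk, ← tsum_add_one_mul_add_one_rpow_neg hk, ← tsum_mul_left]
  refine (summable_card_height_mul (fun n ↦ by positivity) hs).tsum_le_tsum (fun n ↦ ?_)
    (hs.mul_left 8)
  rw [← mul_assoc]
  gcongr
  exact_mod_cast card_height_eq_le n

theorem le_tsum_height_rpow {k : ℝ} (hk : 2 < k) :
    ∑' n : ℕ, 1 / (n : ℝ) ^ (k - 1) ≤
      ∑' z : QuadraticOrder u b, ((z.height : ℝ) + 1) ^ (-k) := by
  have hs := summable_add_one_mul_add_one_rpow_neg hk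
  rw [tsum_height_rpow hk, ← tsum_add_one_mul_add_one_rpow_neg hk]
  refine hs.tsum_le_tsum (fun n ↦ ?_) (summable_card_height_mul (fun n ↦ by positivity) hs)
  gcongr
  exact_mod_cast succ_le_card_height_eq n

variable (u b) in
theorem isTheta_tsum_height_rpow :
    (fun s : ℝ ↦ ∑' z : QuadraticOrder u b, ((z.height : ℝ) + 1) ^ (-(2 * s))) =Θ[𝓝[>] 1]
      fun s ↦ (s - 1)⁻¹ := by
  refine IsTheta.trans ⟨IsBigO.of_bound 8 ?_, IsBigO.of_bound 1 ?_⟩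
    isTheta_tsum_one_div_nat_rpow_two_mul_sub_one
  all_goals
    filter_upwards [self_mem_nhdsWithin] with s hs
    have hk : 2 < 2 * s := by linarith [Set.mem_Ioi.1 hs]
    rw [Real.norm_of_nonneg (tsum_nonneg fun _ ↦ by positivity),
      Real.norm_of_nonneg (tsum_nonneg fun _ ↦ by positivity)]
  · exact tsum_height_rpow_le hk
  · rw [one_mul]
    exact le_tsum_height_rpow hk

theorem abs_norm_add_sub_norm_sub_norm_le (z w : QuadraticOrder u b) :
    |(z + w).norm - z.norm - w.norm| ≤ 2 * (1 + |b| + |u|) * (z.height * w.height) := by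
  have hexpand : (z + w).norm - z.norm - w.norm =
      2 * (z.re * w.re) + b * (z.re * w.im + z.im * w.re) - 2 * u * (z.im * w.im) := by
    simp only [QuadraticAlgebra.norm_def, QuadraticAlgebra.re_add, QuadraticAlgebra.im_add]
    ring
  have hmul {x y : ℤ} (hx : |x| ≤ z.height) (hy : |y| ≤ w.height) :
      |x * y| ≤ z.height * w.height := by
    rw [abs_mul]
    exact mul_le_mul hx hy (abs_nonneg y) (Int.natCast_nonneg _)
  have hre := hmul z.abs_re_le_height w.abs_re_le_height
  have him := hmul z.abs_im_le_height w.abs_im_le_height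
  have hmix : |z.re * w.im + z.im * w.re| ≤ 2 * (z.height * w.height) :=
    (abs_add_le _ _).trans <| by
      linarith [hmul z.abs_re_le_height w.abs_im_le_height,
        hmul z.abs_im_le_height w.abs_re_le_height]
  calc |(z + w).norm - z.norm - w.norm|
      ≤ |2 * (z.re * w.re)| + |b * (z.re * w.im + z.im * w.re)| + |2 * u * (z.im * w.im)| := by
        rw [hexpand]
        exact (abs_sub _ _).trans (add_le_add_left (abs_add_le _ _) _)
    _ = 2 * |z.re * w.re| + |b| * |z.re * w.im + z.im * w.re| + 2 * |u| * |z.im * w.im| := by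
        simp only [abs_mul, Nat.abs_ofNat]
    _ ≤ 2 * (z.height * w.height) + |b| * (2 * (z.height * w.height)) +
        2 * |u| * (z.height * w.height) := by gcongr
    _ = 2 * (1 + |b| + |u|) * (z.height * w.height) := by ring

theorem abs_norm_le_height_sq (z : QuadraticOrder u b) :
    |z.norm| ≤ (1 + |b| + |u|) * (z.height : ℤ) ^ 2 := by
  have hdouble : (z + z).norm - z.norm - z.norm = 2 * z.norm := by
    simp only [QuadraticAlgebra.norm_def, QuadraticAlgebra.re_add, QuadraticAlgebra.im_add]
    ring
  have hpolar := abs_norm_add_sub_norm_sub_norm_le z z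
  rw [hdouble, abs_mul, Nat.abs_ofNat] at hpolar
  linarith

theorem abs_norm_sub_norm_add_le (z w : QuadraticOrder u b) :
    |z.norm - (z + w).norm| ≤ (1 + |b| + |u|) * (w.height * (2 * z.height + w.height)) := by
  have hsplit : z.norm - (z + w).norm = -((z + w).norm - z.norm - w.norm) + -w.norm := by ring
  rw [hsplit]
  refine (abs_add_le _ _).trans ?_
  rw [abs_neg, abs_neg]
  linarith [abs_norm_add_sub_norm_sub_norm_le z w, abs_norm_le_height_sq w]

theorem height_add_one_le_mul (z w : QuadraticOrder u b) :
    (z.height : ℝ) + 1 ≤ (w.height + 1) * ((z + w).height + 1) := by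
  have hle : z.height ≤ (z + w).height + w.height := by
    simpa [height_neg] using height_add_le (z + w) (-w)
  exact_mod_cast (by nlinarith : z.height + 1 ≤ (w.height + 1) * ((z + w).height + 1))

theorem isCoprime_norm_one_add_mul (m : ℤ) (w : QuadraticOrder u b) :
    IsCoprime (QuadraticAlgebra.norm (1 + (m : QuadraticOrder u b) * w)) m := by
  refine ⟨1, -(2 * w.re + b * w.im + m * w.norm), ?_⟩
  simp only [QuadraticAlgebra.norm_def, QuadraticAlgebra.re_add, QuadraticAlgebra.im_add,
    QuadraticAlgebra.re_one, QuadraticAlgebra.im_one, QuadraticAlgebra.re_mul,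
    QuadraticAlgebra.im_mul, QuadraticAlgebra.re_intCast, QuadraticAlgebra.im_intCast, Int.cast_id]
  ring

theorem height_one_add_mul_le (m : ℕ) (w : QuadraticOrder u b) :
    height (1 + (m : QuadraticOrder u b) * w) ≤ (m + 1) * (w.height + 1) := by
  have hone : height (1 : QuadraticOrder u b) = 1 := rfl
  have hmul : height ((m : QuadraticOrder u b) * w) = m * w.height := by
    simp [height, Int.natAbs_mul, Nat.mul_max_mul_left]
  calc height (1 + (m : QuadraticOrder u b) * w) ≤ 1 + m * w.height := by
        rw [← hone, ← hmul]
        exact height_add_le _ _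
    _ ≤ (m + 1) * (w.height + 1) := by nlinarith

theorem norm_one_add_mul_le (m : ℕ) (w : QuadraticOrder u b) :
    ((QuadraticAlgebra.norm (1 + (m : QuadraticOrder u b) * w) : ℤ) : ℝ) ≤
      (1 + |(b : ℝ)| + |(u : ℝ)|) * (m + 1) ^ 2 * ((w.height : ℝ) + 1) ^ 2 := by
  set z : QuadraticOrder u b := 1 + (m : QuadraticOrder u b) * w
  have hheight : (z.height : ℝ) ≤ (m + 1) * (w.height + 1) := by
    exact_mod_cast height_one_add_mul_le m w
  calc (z.norm : ℝ) ≤ (1 + |(b : ℝ)| + |(u : ℝ)|) * (z.height : ℝ) ^ 2 := by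
        exact_mod_cast (le_abs_self _).trans (abs_norm_le_height_sq z)
    _ ≤ (1 + |(b : ℝ)| + |(u : ℝ)|) * ((m + 1) * (w.height + 1)) ^ 2 := by gcongr
    _ = _ := by ring

theorem neg_of_discr_neg (hD : b ^ 2 + 4 * u < 0) : u < 0 := by
  nlinarith [sq_nonneg b]

variable [hD : Fact (b ^ 2 + 4 * u < 0)]

theorem height_sq_le_norm (z : QuadraticOrder u b) : (z.height : ℤ) ^ 2 ≤ -4 * u * z.norm := by
  have hu : 0 ≤ -u - 1 := by linarith [Int.add_one_le_iff.2 (neg_of_discr_neg hD.out)]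
  have hd : 0 ≤ -(b ^ 2 + 4 * u) - 1 := by linarith [Int.add_one_le_iff.2 hD.out]
  have hre : z.re ^ 2 ≤ -4 * u * z.norm := by
    have hsq : -4 * u * z.norm = (b * z.re - 2 * u * z.im) ^ 2 +
        (-(b ^ 2 + 4 * u) - 1) * z.re ^ 2 + z.re ^ 2 := by
      rw [QuadraticAlgebra.norm_def]; ring
    rw [hsq]
    exact le_add_of_nonneg_left (by positivity)
  have him : z.im ^ 2 ≤ -4 * u * z.norm := by
    have hsq : -4 * u * z.norm = (-u - 1) * ((2 * z.re + b * z.im) ^ 2 +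
        (-(b ^ 2 + 4 * u) - 1) * z.im ^ 2 + z.im ^ 2) + (2 * z.re + b * z.im) ^ 2 +
        (-(b ^ 2 + 4 * u) - 1) * z.im ^ 2 + z.im ^ 2 := by
      rw [QuadraticAlgebra.norm_def]; ring
    rw [hsq]
    exact le_add_of_nonneg_left (by positivity)
  rcases max_choice z.re.natAbs z.im.natAbs with h | h <;>
    rwa [height, h, Int.natCast_natAbs, sq_abs]

protected theorem norm_nonneg (z : QuadraticOrder u b) : 0 ≤ z.norm := by
  have hu : 0 < -4 * u := by linarith [neg_of_discr_neg hD.out]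
  exact nonneg_of_mul_nonneg_right ((sq_nonneg _).trans z.height_sq_le_norm) hu

protected theorem norm_pos {z : QuadraticOrder u b} (hz : z ≠ 0) : 0 < z.norm := by
  refine z.norm_nonneg.lt_of_ne fun h ↦ hz (height_eq_zero.1 ?_)
  have hle := z.height_sq_le_norm
  rw [← h, mul_zero] at hle
  exact_mod_cast sq_eq_zero_iff.1 (hle.antisymm (sq_nonneg _))

theorem one_le_norm {z : QuadraticOrder u b} (hz : z ≠ 0) : (1 : ℝ) ≤ z.norm := by
  exact_mod_cast QuadraticOrder.norm_pos hz

theorem height_add_one_sq_le {z : QuadraticOrder u b} (hz : z ≠ 0) :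
    ((z.height : ℝ) + 1) ^ 2 ≤ 16 * |(u : ℝ)| * z.norm := by
  have hu : (u : ℝ) < 0 := by exact_mod_cast neg_of_discr_neg hD.out
  have hone : (1 : ℝ) ≤ z.height := by
    exact_mod_cast Nat.one_le_iff_ne_zero.2 (height_eq_zero.not.2 hz)
  have hsq : (z.height : ℝ) ^ 2 ≤ -4 * u * z.norm := by exact_mod_cast z.height_sq_le_norm
  rw [abs_of_neg hu]
  nlinarith

theorem norm_rpow_nonneg (s : ℝ) (z : QuadraticOrder u b) : 0 ≤ (z.norm : ℝ) ^ (-s) :=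
  Real.rpow_nonneg (by exact_mod_cast z.norm_nonneg) _

theorem norm_rpow_le_one {s : ℝ} (hs : 0 < s) (z : QuadraticOrder u b) :
    (z.norm : ℝ) ^ (-s) ≤ 1 := by
  rcases eq_or_ne z 0 with rfl | hz
  · rw [QuadraticAlgebra.norm_zero, Int.cast_zero, Real.zero_rpow (neg_ne_zero.2 hs.ne')]
    exact zero_le_one
  · exact Real.rpow_le_one_of_one_le_of_nonpos (one_le_norm hz) (neg_nonpos.2 hs.le)

theorem norm_rpow_le {s : ℝ} (hs : 0 < s) (z : QuadraticOrder u b) :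
    (z.norm : ℝ) ^ (-s) ≤ (16 * |(u : ℝ)|) ^ s * ((z.height : ℝ) + 1) ^ (-(2 * s)) := by
  rcases eq_or_ne z 0 with rfl | hz
  · rw [QuadraticAlgebra.norm_zero, Int.cast_zero, Real.zero_rpow (neg_ne_zero.2 hs.ne')]
    positivity
  have hN : (0 : ℝ) < z.norm := zero_lt_one.trans_le (one_le_norm hz)
  have hu : 0 < 16 * |(u : ℝ)| :=
    mul_pos (by norm_num) (abs_pos.2 (by exact_mod_cast (neg_of_discr_neg hD.out).ne))
  calc (z.norm : ℝ) ^ (-s) = (16 * |(u : ℝ)|) ^ s * (16 * |(u : ℝ)| * z.norm) ^ (-s) := by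
        rw [Real.mul_rpow hu.le hN.le, ← mul_assoc, ← Real.rpow_add hu, add_neg_cancel,
          Real.rpow_zero, one_mul]
    _ ≤ (16 * |(u : ℝ)|) ^ s * (((z.height : ℝ) + 1) ^ 2) ^ (-s) := by
        refine mul_le_mul_of_nonneg_left ?_ (by positivity)
        exact Real.rpow_le_rpow_of_nonpos (by positivity) (height_add_one_sq_le hz)
          (neg_nonpos.2 hs.le)
    _ = (16 * |(u : ℝ)|) ^ s * ((z.height : ℝ) + 1) ^ (-(2 * s)) := by
        rw [← Real.rpow_natCast, ← Real.rpow_mul (by positivity), Nat.cast_ofNat, mul_neg]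

theorem summable_norm_rpow {s : ℝ} (hs : 1 < s) :
    Summable fun z : QuadraticOrder u b ↦ (z.norm : ℝ) ^ (-s) :=
  Summable.of_nonneg_of_le (norm_rpow_nonneg s) (norm_rpow_le (by linarith))
    ((summable_height_rpow (by linarith)).mul_left _)

theorem isBigO_tsum_indicator_norm_rpow (T : Set (QuadraticOrder u b)) :
    (fun s : ℝ ↦ ∑' z, T.indicator (fun z : QuadraticOrder u b ↦ (z.norm : ℝ) ^ (-s)) z)
      =O[𝓝[>] 1] fun s ↦ (s - 1)⁻¹ := by
  refine IsBigO.trans (IsBigO.of_bound ((16 * |(u : ℝ)|) ^ (2 : ℝ)) ?_)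
    (isTheta_tsum_height_rpow u b).isBigO
  filter_upwards [Ioc_mem_nhdsGT one_lt_two] with s ⟨hs, hs2⟩
  have hu : (1 : ℝ) ≤ 16 * |(u : ℝ)| := by
    have : (1 : ℝ) ≤ |(u : ℝ)| := by
      exact_mod_cast Int.one_le_abs (neg_of_discr_neg hD.out).ne
    linarith
  rw [Real.norm_of_nonneg (tsum_nonneg (Set.indicator_nonneg fun z _ ↦ norm_rpow_nonneg s z)),
    Real.norm_of_nonneg (tsum_nonneg fun _ ↦ by positivity), ← tsum_mul_left]
  refine ((summable_norm_rpow hs).indicator T).tsum_le_tsum (fun z ↦ ?_)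
    ((summable_height_rpow (by linarith)).mul_left _)
  calc T.indicator (fun z ↦ (z.norm : ℝ) ^ (-s)) z ≤ (z.norm : ℝ) ^ (-s) :=
        Set.indicator_le_self' (fun _ _ ↦ norm_rpow_nonneg s _) z
    _ ≤ (16 * |(u : ℝ)|) ^ s * ((z.height : ℝ) + 1) ^ (-(2 * s)) := norm_rpow_le (by linarith) z
    _ ≤ (16 * |(u : ℝ)|) ^ (2 : ℝ) * ((z.height : ℝ) + 1) ^ (-(2 * s)) := by gcongr

theorem exists_abs_norm_rpow_sub_le_of_ne_zero (w : QuadraticOrder u b) :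
    ∃ C : ℝ, 0 ≤ C ∧ ∀ s ∈ Set.Ioc (1 : ℝ) 2, ∀ z : QuadraticOrder u b, z ≠ 0 → z + w ≠ 0 →
      |(z.norm : ℝ) ^ (-s) - ((z + w).norm : ℝ) ^ (-s)| ≤ C * ((z.height : ℝ) + 1) ^ (-3 : ℝ) := by
  set A : ℝ := 16 * |(u : ℝ)|
  set B : ℝ := (1 + |(b : ℝ)| + |(u : ℝ)|) * (w.height * (2 + w.height)) with hB
  set V : ℝ := w.height + 1
  refine ⟨2 * B * (A ^ 2 * V ^ 2), by positivity, fun s ⟨hs, hs2⟩ z hz hzw ↦ ?_⟩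
  set h : ℝ := z.height + 1 with hh
  have hN := one_le_norm hz
  have hN' := one_le_norm hzw
  have hdiff : |(z.norm : ℝ) - (z + w).norm| ≤ B * h := by
    calc |(z.norm : ℝ) - (z + w).norm|
        ≤ (1 + |(b : ℝ)| + |(u : ℝ)|) * (w.height * (2 * z.height + w.height)) := by
          exact_mod_cast abs_norm_sub_norm_add_le z w
      _ ≤ (1 + |(b : ℝ)| + |(u : ℝ)|) * (w.height * ((2 + w.height) * h)) := by
          gcongr
          have : (0 : ℝ) ≤ w.height * z.height := by positivity
          rw [hh]
          linarith
      _ = B * h := by rw [hB]; ring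
  have hheight : h ^ 4 ≤ A ^ 2 * V ^ 2 * (z.norm * (z + w).norm) := by
    calc h ^ 4 = h ^ 2 * h ^ 2 := by ring
      _ ≤ h ^ 2 * (V * ((z + w).height + 1)) ^ 2 := by
        gcongr
        exact height_add_one_le_mul z w
      _ = V ^ 2 * (h ^ 2 * ((z + w).height + 1) ^ 2) := by ring
      _ ≤ V ^ 2 * (A * z.norm * (A * (z + w).norm)) := by
        gcongr
        exacts [height_add_one_sq_le hz, height_add_one_sq_le hzw]
      _ = A ^ 2 * V ^ 2 * (z.norm * (z + w).norm) := by ring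
  rw [Real.rpow_neg (by positivity) 3, ← div_eq_mul_inv, le_div_iff₀ (by positivity)]
  calc |(z.norm : ℝ) ^ (-s) - ((z + w).norm : ℝ) ^ (-s)| * h ^ (3 : ℝ)
      ≤ s * |(z.norm : ℝ) - (z + w).norm| / (z.norm * (z + w).norm) * h ^ (3 : ℝ) := by
        gcongr
        exact abs_rpow_neg_sub_rpow_neg_le hN hN' hs.le
    _ ≤ 2 * (B * h) / (z.norm * (z + w).norm) * h ^ (3 : ℝ) := by gcongr
    _ = 2 * B * (h ^ 4 / (z.norm * (z + w).norm)) := by norm_cast; ring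
    _ ≤ 2 * B * (A ^ 2 * V ^ 2) := by
        gcongr
        exact (div_le_iff₀ (by positivity)).2 hheight

theorem abs_norm_rpow_sub_le_of_eq_zero {z w : QuadraticOrder u b} (h : z = 0 ∨ z + w = 0)
    {s : ℝ} (hs : 0 < s) :
    |(z.norm : ℝ) ^ (-s) - ((z + w).norm : ℝ) ^ (-s)| ≤
      ((w.height : ℝ) + 1) ^ (3 : ℝ) * ((z.height : ℝ) + 1) ^ (-3 : ℝ) := by
  have hheight : (z.height : ℝ) + 1 ≤ w.height + 1 := by
    rcases h with rfl | h
    · simp [height]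
    · simpa [h, height] using height_add_one_le_mul z w
  calc |(z.norm : ℝ) ^ (-s) - ((z + w).norm : ℝ) ^ (-s)| ≤ 1 :=
        abs_sub_le_of_nonneg_of_le (norm_rpow_nonneg s z) (norm_rpow_le_one hs z)
          (norm_rpow_nonneg s _) (norm_rpow_le_one hs _)
    _ = ((z.height : ℝ) + 1) ^ (3 : ℝ) * ((z.height : ℝ) + 1) ^ (-3 : ℝ) := by
        rw [← Real.rpow_add (by positivity), add_neg_cancel, Real.rpow_zero]
    _ ≤ ((w.height : ℝ) + 1) ^ (3 : ℝ) * ((z.height : ℝ) + 1) ^ (-3 : ℝ) := by gcongr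

theorem isBigO_tsum_indicator_sub_shift (T : Set (QuadraticOrder u b)) (w : QuadraticOrder u b) :
    (fun s : ℝ ↦ ∑' z, T.indicator (fun z : QuadraticOrder u b ↦ (z.norm : ℝ) ^ (-s)) z -
      ∑' z, T.indicator (fun z ↦ ((z + w).norm : ℝ) ^ (-s)) z) =O[𝓝[>] 1] (1 : ℝ → ℝ) := by
  obtain ⟨C, hC0, hC⟩ := exists_abs_norm_rpow_sub_le_of_ne_zero w
  set V : ℝ := (w.height + 1) ^ (3 : ℝ)
  have hbound := (summable_height_rpow (u := u) (b := b) (by norm_num : (2 : ℝ) < 3)).mul_left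
    (C + V)
  refine IsBigO.of_bound (∑' z : QuadraticOrder u b, (C + V) * ((z.height : ℝ) + 1) ^ (-3 : ℝ)) ?_
  filter_upwards [Ioc_mem_nhdsGT one_lt_two] with s hs
  have hsum := summable_norm_rpow (u := u) (b := b) hs.1
  have hsum' : Summable fun z : QuadraticOrder u b ↦ ((z + w).norm : ℝ) ^ (-s) :=
    (Equiv.addRight w).summable_iff.2 hsum
  rw [← (hsum.indicator T).tsum_sub (hsum'.indicator T), Pi.one_apply, norm_one, mul_one]
  refine tsum_of_norm_bounded hbound.hasSum fun z ↦ ?_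
  have hV0 : 0 ≤ V := by positivity
  have hle : |(z.norm : ℝ) ^ (-s) - ((z + w).norm : ℝ) ^ (-s)| ≤
      (C + V) * ((z.height : ℝ) + 1) ^ (-3 : ℝ) := by
    by_cases hz : z = 0 ∨ z + w = 0
    · refine (abs_norm_rpow_sub_le_of_eq_zero hz (by linarith [hs.1])).trans ?_
      gcongr
      linarith
    · refine (hC s hs z (not_or.1 hz).1 (not_or.1 hz).2).trans ?_
      gcongr
      linarith
  by_cases hz : z ∈ T
  · simpa [hz] using hle
  · simpa [hz] using (abs_nonneg _).trans hle

theorem norm_one_add_mul_pos {m : ℕ} (hm : 1 < m) (w : QuadraticOrder u b) :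
    0 < QuadraticAlgebra.norm (1 + (m : QuadraticOrder u b) * w) := by
  refine (QuadraticOrder.norm_nonneg _).lt_of_ne fun h ↦ ?_
  have hcop := isCoprime_norm_one_add_mul (m : ℤ) w
  rw [Int.cast_natCast, ← h, isCoprime_zero_left, Int.isUnit_iff] at hcop
  omega

theorem height_rpow_le_norm_one_add_mul_rpow {m : ℕ} (hm : 1 < m) {s : ℝ} (hs : 0 < s)
    (w : QuadraticOrder u b) :
    ((w.height : ℝ) + 1) ^ (-(2 * s)) ≤ ((1 + |(b : ℝ)| + |(u : ℝ)|) * (m + 1) ^ 2) ^ s *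
      ((QuadraticAlgebra.norm (1 + (m : QuadraticOrder u b) * w) : ℤ) : ℝ) ^ (-s) := by
  set C : ℝ := (1 + |(b : ℝ)| + |(u : ℝ)|) * (m + 1) ^ 2
  have hC : 0 < C := by positivity
  have hN : (0 : ℝ) < (QuadraticAlgebra.norm (1 + (m : QuadraticOrder u b) * w) : ℤ) := by
    exact_mod_cast norm_one_add_mul_pos hm w
  calc ((w.height : ℝ) + 1) ^ (-(2 * s)) = (((w.height : ℝ) + 1) ^ 2) ^ (-s) := by
        rw [← Real.rpow_natCast, ← Real.rpow_mul (by positivity), Nat.cast_ofNat, mul_neg]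
    _ = C ^ s * (C * ((w.height : ℝ) + 1) ^ 2) ^ (-s) := by
        rw [Real.mul_rpow hC.le (by positivity), ← mul_assoc, ← Real.rpow_add hC, add_neg_cancel,
          Real.rpow_zero, one_mul]
    _ ≤ C ^ s * ((QuadraticAlgebra.norm (1 + (m : QuadraticOrder u b) * w) : ℤ) : ℝ) ^ (-s) := by
        refine mul_le_mul_of_nonneg_left ?_ (by positivity)
        exact Real.rpow_le_rpow_of_nonpos hN (norm_one_add_mul_le m w) (neg_nonpos.2 hs.le)

theorem isBigO_inv_tsum_indicator_isCoprime_norm {m : ℕ} (hm : 1 < m) :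
    (fun s : ℝ ↦ (s - 1)⁻¹) =O[𝓝[>] 1] fun s : ℝ ↦
      ∑' z, {z : QuadraticOrder u b | IsCoprime z.norm (m : ℤ)}.indicator
        (fun z ↦ (z.norm : ℝ) ^ (-s)) z := by
  set T := {z : QuadraticOrder u b | IsCoprime z.norm (m : ℤ)}
  set C : ℝ := (1 + |(b : ℝ)| + |(u : ℝ)|) * (m + 1) ^ 2
  have hC : 1 ≤ C := by
    have := abs_nonneg (b : ℝ)
    have := abs_nonneg (u : ℝ)
    exact one_le_mul_of_one_le_of_one_le (by linarith) (one_le_pow₀ (by simp))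
  refine (isTheta_tsum_height_rpow u b).symm.isBigO.trans (IsBigO.of_bound (C ^ (2 : ℝ)) ?_)
  filter_upwards [Ioc_mem_nhdsGT one_lt_two] with s ⟨hs, hs2⟩
  let f : QuadraticOrder u b → ℝ := T.indicator fun z ↦ (z.norm : ℝ) ^ (-s)
  let g : QuadraticOrder u b → QuadraticOrder u b := fun w ↦ 1 + (m : QuadraticOrder u b) * w
  have hf0 : ∀ z, 0 ≤ f z := Set.indicator_nonneg fun z _ ↦ norm_rpow_nonneg s z
  have hf : Summable f := (summable_norm_rpow hs).indicator T
  have hg : Function.Injective g := fun w w' h ↦ by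
    have hm0 : m ≠ 0 := by lia
    simpa [g, QuadraticAlgebra.ext_iff, hm0] using h
  have hfg (w : QuadraticOrder u b) : f (g w) = ((g w).norm : ℝ) ^ (-s) :=
    Set.indicator_of_mem (by
      have hcop := isCoprime_norm_one_add_mul (m : ℤ) w
      rwa [Int.cast_natCast] at hcop) _
  rw [Real.norm_of_nonneg (tsum_nonneg fun _ ↦ by positivity),
    Real.norm_of_nonneg (tsum_nonneg hf0)]
  calc ∑' w : QuadraticOrder u b, ((w.height : ℝ) + 1) ^ (-(2 * s))
      ≤ ∑' w, C ^ (2 : ℝ) * f (g w) := by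
        refine (summable_height_rpow (by linarith)).tsum_le_tsum (fun w ↦ ?_)
          ((hf.comp_injective hg).mul_left _)
        refine (height_rpow_le_norm_one_add_mul_rpow hm (by linarith) w).trans ?_
        rw [hfg]
        have := norm_rpow_nonneg s (g w)
        gcongr
    _ = C ^ (2 : ℝ) * ∑' w, f (g w) := tsum_mul_left
    _ ≤ C ^ (2 : ℝ) * ∑' z, f z :=
        mul_le_mul_of_nonneg_left (tsum_comp_le_tsum_of_inj hf hf0 hg) (by positivity)

end QuadraticOrder

/-! ### Ideals with a norm -/

theorem span_singleton_dvd_iff_le {R : Type*} [CommRing R] {x : R} {A : Ideal R} :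
    Ideal.span {x} ∣ A ↔ A ≤ Ideal.span {x} := by
  refine ⟨Ideal.le_of_dvd, fun h ↦ ⟨Submodule.comap (LinearMap.mulLeft R x) A, le_antisymm ?_ ?_⟩⟩
  · intro z hz
    obtain ⟨w, rfl⟩ := Ideal.mem_span_singleton.1 (h hz)
    exact Ideal.mem_span_singleton_mul.2 ⟨w, hz, rfl⟩
  · intro z hz
    obtain ⟨w, hw, rfl⟩ := Ideal.mem_span_singleton_mul.1 hz
    exact hw

namespace QuadraticOrder

open scoped QuadraticAlgebra

variable {u b : ℤ} {I J K : Ideal (QuadraticOrder u b)} {n k : ℕ}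

/-- The conjugate `{star z | z ∈ I}` of an ideal of a quadratic order. -/
def conj (I : Ideal (QuadraticOrder u b)) : Ideal (QuadraticOrder u b) :=
  I.map (starRingEnd (QuadraticOrder u b))

theorem mem_conj {z : QuadraticOrder u b} : z ∈ conj I ↔ star z ∈ I := by
  rw [conj, Ideal.mem_map_iff_of_surjective _ fun y ↦ ⟨star y, star_star y⟩]
  refine ⟨?_, fun hz ↦ ⟨star z, hz, star_star z⟩⟩
  rintro ⟨x, hx, rfl⟩
  rwa [starRingEnd_apply, star_star]

theorem conj_conj (I : Ideal (QuadraticOrder u b)) : conj (conj I) = I := by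
  ext z
  rw [mem_conj, mem_conj, star_star]

theorem conj_mul (I J : Ideal (QuadraticOrder u b)) : conj (I * J) = conj I * conj J :=
  Ideal.map_mul _ _ _

theorem conj_sup (I J : Ideal (QuadraticOrder u b)) : conj (I ⊔ J) = conj I ⊔ conj J :=
  Ideal.map_sup _ _ _

theorem conj_span_singleton (z : QuadraticOrder u b) :
    conj (Ideal.span {z}) = Ideal.span {star z} := by
  rw [conj, Ideal.map_span, Set.image_singleton, starRingEnd_apply]

theorem conj_span_natCast (n : ℕ) :
    conj (Ideal.span {(n : QuadraticOrder u b)}) = Ideal.span {(n : QuadraticOrder u b)} := by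
  rw [conj_span_singleton, star_natCast]

theorem span_mul_conj_span (z : QuadraticOrder u b) :
    Ideal.span {z} * conj (Ideal.span {z}) = Ideal.span {(z.norm : QuadraticOrder u b)} := by
  rw [conj_span_singleton, Ideal.span_singleton_mul_span_singleton,
    ← QuadraticAlgebra.algebraMap_norm_eq_mul_star, eq_intCast]

theorem intCast_dvd_iff {a : ℤ} {z : QuadraticOrder u b} :
    (a : QuadraticOrder u b) ∣ z ↔ a ∣ z.re ∧ a ∣ z.im := by
  rw [← eq_intCast (algebraMap ℤ (QuadraticOrder u b)), QuadraticAlgebra.algebraMap_dvd_iff]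

theorem natCast_dvd_iff {z : QuadraticOrder u b} :
    (n : QuadraticOrder u b) ∣ z ↔ (n : ℤ) ∣ z.re ∧ (n : ℤ) ∣ z.im := by
  rw [← Int.cast_natCast, intCast_dvd_iff]

theorem natCast_dvd_natCast_iff :
    (n : QuadraticOrder u b) ∣ (k : QuadraticOrder u b) ↔ n ∣ k := by
  rw [natCast_dvd_iff, QuadraticAlgebra.re_natCast, QuadraticAlgebra.im_natCast,
    and_iff_left (dvd_zero _), Int.natCast_dvd_natCast]

theorem span_natCast_inj :
    Ideal.span {(n : QuadraticOrder u b)} = Ideal.span {(k : QuadraticOrder u b)} ↔ n = k := by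
  refine ⟨fun h ↦ Nat.dvd_antisymm ?_ ?_, fun h ↦ by rw [h]⟩
  · exact natCast_dvd_natCast_iff.1 (Ideal.span_singleton_le_span_singleton.1 h.ge)
  · exact natCast_dvd_natCast_iff.1 (Ideal.span_singleton_le_span_singleton.1 h.le)

/-- The ideal `I` is invertible with norm `n`. In a non-maximal order an ideal need not be
invertible, and then no `n` satisfies this. -/
structure IsNorm (I : Ideal (QuadraticOrder u b)) (n : ℕ) : Prop where
  pos : 0 < n
  mul_conj : I * conj I = Ideal.span {(n : QuadraticOrder u b)}

theorem isNorm_one : IsNorm (1 : Ideal (QuadraticOrder u b)) 1 where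
  pos := one_pos
  mul_conj := by rw [conj, Ideal.one_eq_top, Ideal.map_top, Ideal.top_mul, Nat.cast_one,
    Ideal.span_singleton_one]

theorem isNorm_span_natCast (hn : 0 < n) :
    IsNorm (Ideal.span {(n : QuadraticOrder u b)}) (n ^ 2) where
  pos := by positivity
  mul_conj := by
    rw [conj_span_natCast, Ideal.span_singleton_mul_span_singleton, Nat.cast_pow, sq]

namespace IsNorm

theorem unique (h : IsNorm I n) (h' : IsNorm I k) : n = k :=
  span_natCast_inj.1 (h.mul_conj.symm.trans h'.mul_conj)

theorem natCast_mem (h : IsNorm I n) : (n : QuadraticOrder u b) ∈ I :=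
  Ideal.mul_le_left (h.mul_conj ▸ Ideal.mem_span_singleton_self _)

theorem natCast_ne_zero (h : IsNorm I n) : (n : QuadraticOrder u b) ≠ 0 :=
  Nat.cast_ne_zero.2 h.pos.ne'

theorem ne_bot (h : IsNorm I n) : I ≠ ⊥ := fun hI ↦
  h.natCast_ne_zero (by simpa only [hI, Ideal.mem_bot] using h.natCast_mem)

theorem conj (h : IsNorm I n) : IsNorm (conj I) n where
  pos := h.pos
  mul_conj := by rw [conj_conj, mul_comm, h.mul_conj]

theorem mul (h : IsNorm I n) (h' : IsNorm J k) : IsNorm (I * J) (n * k) where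
  pos := Nat.mul_pos h.pos h'.pos
  mul_conj := by
    rw [conj_mul, mul_mul_mul_comm, h.mul_conj, h'.mul_conj,
      Ideal.span_singleton_mul_span_singleton, Nat.cast_mul]

end IsNorm

theorem exists_le_span_natCast_and_mul_mem (hI : I ≠ ⊥) :
    ∃ k : ℕ, 0 < k ∧ I ≤ Ideal.span {(k : QuadraticOrder u b)} ∧
      ∃ w : QuadraticOrder u b, w.im = 1 ∧ (k : QuadraticOrder u b) * w ∈ I := by
  let Y : Ideal ℤ := (I.restrictScalars ℤ).map (QuadraticAlgebra.imₗ u b)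
  obtain ⟨y, hy⟩ := (IsPrincipalIdealRing.principal Y).principal
  have hY (x : ℤ) : (∃ z ∈ I, z.im = x) ↔ (y.natAbs : ℤ) ∣ x := by
    rw [Int.natAbs_dvd, ← Ideal.mem_span_singleton, ← Ideal.submodule_span_eq, ← hy]
    rfl
  set k := y.natAbs
  have hle : I ≤ Ideal.span {(k : QuadraticOrder u b)} := fun z hz ↦ by
    have him : (k : ℤ) ∣ z.im := (hY _).1 ⟨z, hz, rfl⟩
    have hω : (k : ℤ) ∣ z.re + b * z.im :=
      (hY _).1 ⟨QuadraticAlgebra.omega * z, I.mul_mem_left _ hz, by simp⟩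
    rw [Ideal.mem_span_singleton, natCast_dvd_iff]
    exact ⟨(Int.dvd_add_left (him.mul_left b)).1 hω, him⟩
  have hk : k ≠ 0 := fun hk ↦ hI (eq_bot_iff.2 (by simpa [hk] using hle))
  obtain ⟨z, hz, hzk⟩ := (hY k).2 dvd_rfl
  obtain ⟨w, rfl⟩ := Ideal.mem_span_singleton.1 (hle hz)
  refine ⟨k, Nat.pos_of_ne_zero hk, hle, w, ?_, hz⟩
  exact mul_left_cancel₀ (Int.natCast_ne_zero.2 hk) (by simpa using hzk)

/-- The invertible ideal `J` of norm `e` is `(e, ω - t)`; equivalently, `J` is not divisible by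
any integer `k > 1`. -/
structure IsPrimitive (J : Ideal (QuadraticOrder u b)) (e : ℕ) (t : ℤ) : Prop where
  isNorm : IsNorm J e
  mem_iff : ∀ z, z ∈ J ↔ (e : ℤ) ∣ z.re + t * z.im

theorem IsPrimitive.dvd {e : ℕ} {t : ℤ} (h : IsPrimitive J e t) :
    (e : ℤ) ∣ t ^ 2 - b * t - u := by
  let w : QuadraticOrder u b := ⟨-t, 1⟩
  have hw : w ∈ J := (h.mem_iff w).2 (by simp [w])
  have hmul : w * star w ∈ J * conj J :=
    Ideal.mul_mem_mul hw (mem_conj.2 ((star_star w).symm ▸ hw))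
  rw [h.isNorm.mul_conj, Ideal.mem_span_singleton, natCast_dvd_iff,
    ← QuadraticAlgebra.algebraMap_norm_eq_mul_star] at hmul
  convert hmul.1 using 1
  simp [w, QuadraticAlgebra.norm_def]
  ring

theorem IsNorm.isPrimitive {w : QuadraticOrder u b} {e : ℕ} (h : IsNorm J e) (hw : w ∈ J)
    (him : w.im = 1) : IsPrimitive J e (-w.re) where
  isNorm := h
  mem_iff z := by
    have hint (x : ℤ) : (x : QuadraticOrder u b) ∈ J ↔ (e : ℤ) ∣ x := by
      refine ⟨fun hx ↦ ?_, ?_⟩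
      · have hmul : w * x ∈ J * QuadraticOrder.conj J :=
          Ideal.mul_mem_mul hw (mem_conj.2 (by rwa [star_intCast]))
        rw [h.mul_conj, Ideal.mem_span_singleton, natCast_dvd_iff] at hmul
        simpa [him] using hmul.2
      · rintro ⟨y, rfl⟩
        rw [Int.cast_mul, Int.cast_natCast]
        exact J.mul_mem_right _ h.natCast_mem
    have hz : z = ((z.re + -w.re * z.im : ℤ) : QuadraticOrder u b) + z.im * w := by
      ext
      · simp; ring
      · simp [him]
    rw [← hint]
    nth_rw 1 [hz]
    exact J.add_mem_iff_left (J.mul_mem_left _ hw)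

variable [hD : Fact (b ^ 2 + 4 * u < 0)]

instance : IsDomain (QuadraticOrder u b) := by
  have : NoZeroDivisors (QuadraticOrder u b) := ⟨fun {x y} h ↦ by
    by_contra! hxy
    have hpos := mul_pos (QuadraticOrder.norm_pos hxy.1) (QuadraticOrder.norm_pos hxy.2)
    rw [← map_mul, h, QuadraticAlgebra.norm_zero] at hpos
    exact hpos.false⟩
  exact NoZeroDivisors.to_isDomain _

theorem isNorm_span {z : QuadraticOrder u b} (hz : z ≠ 0) :
    IsNorm (Ideal.span {z}) z.norm.natAbs where
  pos := Int.natAbs_pos.2 (QuadraticOrder.norm_pos hz).ne'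
  mul_conj := by
    rw [span_mul_conj_span, ← Int.cast_natCast (R := QuadraticOrder u b),
      Int.natAbs_of_nonneg z.norm_nonneg]

namespace IsNorm

theorem mul_right_inj (h : IsNorm I n) : I * J = I * K ↔ J = K := by
  refine ⟨fun e ↦ (Ideal.span_singleton_mul_right_inj h.natCast_ne_zero).1 ?_, fun e ↦ by rw [e]⟩
  rw [← h.mul_conj, mul_comm I, mul_assoc, mul_assoc, e]

theorem exists_of_mul (hIJ : IsNorm (I * J) n) (hJ : IsNorm J k) :
    ∃ i, IsNorm I i ∧ n = i * k := by
  have hprod : I * QuadraticOrder.conj I * Ideal.span {(k : QuadraticOrder u b)} =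
      Ideal.span {(n : QuadraticOrder u b)} := by
    rw [← hJ.mul_conj, mul_mul_mul_comm, ← conj_mul, hIJ.mul_conj]
  obtain ⟨i, rfl⟩ : k ∣ n := by
    rw [← natCast_dvd_natCast_iff (u := u) (b := b), ← Ideal.span_singleton_le_span_singleton,
      ← hprod]
    exact Ideal.mul_le_right
  refine ⟨i, ⟨Nat.pos_of_ne_zero (right_ne_zero_of_mul hIJ.pos.ne'), ?_⟩, mul_comm k i⟩
  refine (Ideal.span_singleton_mul_right_inj hJ.natCast_ne_zero).1 ?_
  rw [mul_comm, hprod, Ideal.span_singleton_mul_span_singleton, Nat.cast_mul]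

theorem norm_eq (hI : IsNorm I n) {z : QuadraticOrder u b} (h : I = Ideal.span {z}) :
    z.norm = n := by
  have hz : z ≠ 0 := by
    rintro rfl
    exact hI.ne_bot (h.trans Ideal.span_zero)
  rw [h] at hI
  rw [← Int.natAbs_of_nonneg z.norm_nonneg, (isNorm_span hz).unique hI]

theorem exists_mul_eq_span (hJ : IsNorm J k) {z : QuadraticOrder u b} (hz : z ≠ 0) (hzJ : z ∈ J) :
    ∃ I n, IsNorm I n ∧ I * J = Ideal.span {z} := by
  have hle : Ideal.span {z} * QuadraticOrder.conj J ≤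
      Ideal.span {(k : QuadraticOrder u b)} := by
    rw [← hJ.mul_conj]
    exact Ideal.mul_mono_left ((Ideal.span_singleton_le_iff_mem J).2 hzJ)
  obtain ⟨I, hI⟩ := span_singleton_dvd_iff_le.2 hle
  have hIJ : I * J = Ideal.span {z} := by
    refine (Ideal.span_singleton_mul_right_inj hJ.natCast_ne_zero).1 ?_
    rw [← mul_assoc, ← hI, mul_assoc, mul_comm (QuadraticOrder.conj J), hJ.mul_conj, mul_comm]
  obtain ⟨n, hn, -⟩ := exists_of_mul (hIJ ▸ isNorm_span hz) hJ
  exact ⟨I, n, hn, hIJ⟩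

end IsNorm

theorem natCast_mul_mem_iff (hk : 0 < k) (hI : I = Ideal.span {(k : QuadraticOrder u b)} * J)
    {z : QuadraticOrder u b} : (k : QuadraticOrder u b) * z ∈ I ↔ z ∈ J := by
  rw [hI, Ideal.mem_span_singleton_mul]
  refine ⟨?_, fun h ↦ ⟨z, h, rfl⟩⟩
  rintro ⟨w, hw, h⟩
  rwa [← mul_left_cancel₀ (Nat.cast_ne_zero.2 hk.ne') h]

theorem IsNorm.exists_isPrimitive (h : IsNorm I n) :
    ∃ (k e : ℕ) (t : ℤ) (J : Ideal (QuadraticOrder u b)), 0 < k ∧ n = k ^ 2 * e ∧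
      I = Ideal.span {(k : QuadraticOrder u b)} * J ∧ IsPrimitive J e t := by
  obtain ⟨k, hk, hle, w, him, hw⟩ := exists_le_span_natCast_and_mul_mem h.ne_bot
  obtain ⟨J, rfl⟩ := span_singleton_dvd_iff_le.2 hle
  obtain ⟨e, he, hn⟩ := IsNorm.exists_of_mul (mul_comm J _ ▸ h) (isNorm_span_natCast hk)
  exact ⟨k, e, -w.re, J, hk, hn.trans (mul_comm _ _), rfl,
    he.isPrimitive ((natCast_mul_mem_iff hk rfl).1 hw) him⟩

end QuadraticOrder

/-! ### Class groups of quadratic orders -/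

theorem exists_span_prod_finsetApprox_mul_eq {S ι : Type*} [CommRing S] [IsDomain S]
    [Algebra.IsAlgebraic ℤ S] [DecidableEq ι] [Fintype ι]
    (B : Module.Basis ι ℤ S) {I : Ideal S} (hI : I ≠ ⊥) :
    ∃ (α : S) (A : Ideal S), α ≠ 0 ∧
      algebraMap ℤ S (∏ r ∈ ClassGroup.finsetApprox B AbsoluteValue.absIsAdmissible, r) ∈ A ∧
      Ideal.span {algebraMap ℤ S
        (∏ r ∈ ClassGroup.finsetApprox B AbsoluteValue.absIsAdmissible, r)} * I =
        Ideal.span {α} * A := by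
  set P := algebraMap ℤ S (∏ r ∈ ClassGroup.finsetApprox B AbsoluteValue.absIsAdmissible, r)
  obtain ⟨α, hα, hα0, hmin⟩ := ClassGroup.exists_min AbsoluteValue.abs
    ⟨I, mem_nonZeroDivisors_of_ne_zero hI⟩
  have hle : Ideal.span {P} * I ≤ Ideal.span {α} := by
    refine Ideal.span_singleton_mul_le_iff.2 fun β hβ ↦ Ideal.mem_span_singleton.2 ?_
    obtain ⟨q, r, hr, hlt⟩ :=
      ClassGroup.exists_mem_finset_approx' B AbsoluteValue.absIsAdmissible β hα0
    have hrβ := hmin _ (I.sub_mem (I.smul_of_tower_mem r hβ) (I.mul_mem_left q hα)) hlt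
    rw [sub_eq_zero, Algebra.smul_def] at hrβ
    exact (Dvd.intro_left q hrβ.symm).trans
      (mul_dvd_mul_right (map_dvd _ (Finset.dvd_prod_of_mem (fun r ↦ r) hr)) β)
  obtain ⟨A, hA⟩ := span_singleton_dvd_iff_le.2 hle
  have hmem : P * α ∈ Ideal.span {α} * A := hA ▸ Ideal.mem_span_singleton_mul.2 ⟨α, hα, rfl⟩
  obtain ⟨w, hw, hwP⟩ := Ideal.mem_span_singleton_mul.1 hmem
  rw [mul_comm] at hwP
  exact ⟨α, A, hα0, mul_right_cancel₀ hα0 hwP ▸ hw, hA⟩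

namespace QuadraticOrder

open scoped QuadraticAlgebra nonZeroDivisors

variable {u b : ℤ} {m : ℕ}

/-- The invertible ideals of norm coprime to `m`, each paired with its norm so that the norm is
multiplicative by definition. -/
def normedIdeals (u b : ℤ) (m : ℕ) : Submonoid (ℕ × Ideal (QuadraticOrder u b)) where
  carrier := {p | IsNorm p.2 p.1 ∧ p.1.Coprime m}
  one_mem' := ⟨isNorm_one, Nat.coprime_one_left m⟩
  mul_mem' := fun h h' ↦ ⟨h.1.mul h'.1, Nat.Coprime.mul_left h.2 h'.2⟩

/-- The type of invertible ideals of norm coprime to `m`, bundled with their norms. -/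
def NormedIdeal (u b : ℤ) (m : ℕ) : Type := normedIdeals u b m

namespace NormedIdeal

instance : CommMonoid (NormedIdeal u b m) := inferInstanceAs (CommMonoid (normedIdeals u b m))

/-- The underlying ideal of a `NormedIdeal`. -/
def ideal (p : NormedIdeal u b m) : Ideal (QuadraticOrder u b) := p.1.2

/-- The norm of a `NormedIdeal`. -/
def absNorm (p : NormedIdeal u b m) : ℕ := p.1.1

theorem isNorm (p : NormedIdeal u b m) : IsNorm p.ideal p.absNorm := p.2.1

theorem absNorm_pos (p : NormedIdeal u b m) : 0 < p.absNorm := p.isNorm.pos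

theorem coprime (p : NormedIdeal u b m) : p.absNorm.Coprime m := p.2.2

theorem absNorm_mul (p q : NormedIdeal u b m) : (p * q).absNorm = p.absNorm * q.absNorm := rfl

theorem ideal_one : (1 : NormedIdeal u b m).ideal = 1 := rfl

theorem absNorm_one : (1 : NormedIdeal u b m).absNorm = 1 := rfl

/-- Bundle an ideal with its norm. -/
def mk (I : Ideal (QuadraticOrder u b)) (n : ℕ) (h : IsNorm I n) (hn : n.Coprime m) :
    NormedIdeal u b m := ⟨(n, I), h, hn⟩

theorem ideal_injective : Function.Injective (ideal : NormedIdeal u b m → _) := fun p q h ↦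
  Subtype.ext (Prod.ext (p.isNorm.unique (h ▸ q.isNorm)) h)

/-- The conjugate ideal, which represents the inverse class. -/
def bar (p : NormedIdeal u b m) : NormedIdeal u b m :=
  mk (conj p.ideal) p.absNorm p.isNorm.conj p.coprime

variable [hD : Fact (b ^ 2 + 4 * u < 0)]

theorem isUnit_coeIdeal (p : NormedIdeal u b m) :
    IsUnit (p.ideal : FractionalIdeal (QuadraticOrder u b)⁰
      (FractionRing (QuadraticOrder u b))) := by
  refine isUnit_of_mul_isUnit_left (y := ((conj p.ideal :
    Ideal (QuadraticOrder u b)) : FractionalIdeal _ _)) ?_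
  rw [← FractionalIdeal.coeIdeal_mul, p.isNorm.mul_conj, FractionalIdeal.coeIdeal_span_singleton]
  have hn : algebraMap (QuadraticOrder u b) (FractionRing (QuadraticOrder u b)) p.absNorm ≠ 0 :=
    (map_ne_zero_iff _ (IsFractionRing.injective _ _)).2 p.isNorm.natCast_ne_zero
  refine IsUnit.of_mul_eq_one (FractionalIdeal.spanSingleton _
    (algebraMap (QuadraticOrder u b) (FractionRing (QuadraticOrder u b)) p.absNorm)⁻¹) ?_
  rw [FractionalIdeal.spanSingleton_mul_spanSingleton, mul_inv_cancel₀ hn,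
    FractionalIdeal.spanSingleton_one]

/-- The class of an ideal in the class group of the order. -/
noncomputable def toClassGroup : NormedIdeal u b m →* ClassGroup (QuadraticOrder u b) :=
  (ClassGroup.mk (FractionRing (QuadraticOrder u b))).comp
    (IsUnit.liftRight (((FractionalIdeal.coeIdealHom (QuadraticOrder u b)⁰
      (FractionRing (QuadraticOrder u b))).toMonoidHom.comp (MonoidHom.snd ℕ _)).comp
      (normedIdeals u b m).subtype) isUnit_coeIdeal)

theorem toClassGroup_eq_iff {p q : NormedIdeal u b m} :
    toClassGroup p = toClassGroup q ↔ ∃ x y : QuadraticOrder u b, x ≠ 0 ∧ y ≠ 0 ∧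
      Ideal.span {x} * p.ideal = Ideal.span {y} * q.ideal :=
  ClassGroup.mk_eq_mk_of_coe_ideal rfl rfl

theorem toClassGroup_eq_one_iff {p : NormedIdeal u b m} :
    toClassGroup p = 1 ↔ ∃ z : QuadraticOrder u b, p.ideal = Ideal.span {z} := by
  rw [← map_one toClassGroup, toClassGroup_eq_iff]
  constructor
  · rintro ⟨x, y, hx, hy, h⟩
    rw [ideal_one, mul_one] at h
    have hmem : y ∈ Ideal.span {x} * p.ideal := h ▸ Ideal.mem_span_singleton_self y
    obtain ⟨z, -, rfl⟩ := Ideal.mem_span_singleton_mul.1 hmem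
    refine ⟨z, (Ideal.span_singleton_mul_right_inj hx).1 ?_⟩
    rw [h, Ideal.span_singleton_mul_span_singleton]
  · rintro ⟨z, h⟩
    refine ⟨1, z, one_ne_zero, ?_, by
      rw [h, Ideal.span_singleton_one, Ideal.top_mul, ideal_one, mul_one]⟩
    rintro rfl
    exact p.isNorm.ne_bot (h.trans Ideal.span_zero)

theorem toClassGroup_bar (p : NormedIdeal u b m) : toClassGroup p.bar = (toClassGroup p)⁻¹ := by
  rw [eq_inv_iff_mul_eq_one, ← map_mul, toClassGroup_eq_one_iff]
  exact ⟨p.absNorm, by rw [mul_comm]; exact p.isNorm.mul_conj⟩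

theorem finite_range_toClassGroup : (Set.range (toClassGroup : NormedIdeal u b m → _)).Finite := by
  choose α A hα hPA hA using fun p : NormedIdeal u b m ↦
    exists_span_prod_finsetApprox_mul_eq (QuadraticAlgebra.basis u b) p.isNorm.ne_bot
  have hP := ClassGroup.prod_finsetApprox_ne_zero (QuadraticAlgebra.basis u b)
    AbsoluteValue.absIsAdmissible
  have hfin : (Set.range A).Finite :=
    (Ring.HasFiniteQuotients.finite_setOfPred_mem _ hP).subset (by rintro _ ⟨p, rfl⟩; exact hPA p)
  have hfactors : Function.FactorsThrough (toClassGroup : NormedIdeal u b m → _) A := fun p q h ↦ by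
    refine toClassGroup_eq_iff.2
      ⟨_, _, mul_ne_zero (hα q) hP, mul_ne_zero (hα p) hP, ?_⟩
    rw [← Ideal.span_singleton_mul_span_singleton, ← Ideal.span_singleton_mul_span_singleton,
      mul_assoc, mul_assoc, hA, hA, h, mul_left_comm]
  obtain ⟨g, hg⟩ := (Function.factorsThrough_iff _).1 hfactors
  rw [hg, Set.range_comp]
  exact hfin.image g

/-- The subgroup of the class group formed by the classes of the invertible ideals of norm coprime
to `m`. -/
noncomputable def idealClassGroup (u b : ℤ) (m : ℕ) [Fact (b ^ 2 + 4 * u < 0)] :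
    Subgroup (ClassGroup (QuadraticOrder u b)) where
  toSubmonoid := MonoidHom.mrange (toClassGroup (m := m))
  inv_mem' := by
    rintro _ ⟨p, rfl⟩
    exact ⟨p.bar, toClassGroup_bar p⟩

instance : Finite (idealClassGroup u b m) := finite_range_toClassGroup.to_subtype

/-- The class of an ideal, as an element of `idealClassGroup`. -/
noncomputable def idealClass : NormedIdeal u b m →* idealClassGroup u b m :=
  toClassGroup.codRestrict (idealClassGroup u b m) fun p ↦ ⟨p, rfl⟩

theorem idealClass_surjective :
    Function.Surjective (idealClass : NormedIdeal u b m → idealClassGroup u b m) := by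
  rintro ⟨_, p, rfl⟩
  exact ⟨p, rfl⟩

theorem idealClass_bar (p : NormedIdeal u b m) : idealClass p.bar = (idealClass p)⁻¹ :=
  Subtype.ext (toClassGroup_bar p)

theorem idealClass_eq_iff {p q : NormedIdeal u b m} :
    idealClass p = idealClass q ↔ ∃ x y : QuadraticOrder u b, x ≠ 0 ∧ y ≠ 0 ∧
      Ideal.span {x} * p.ideal = Ideal.span {y} * q.ideal :=
  Subtype.ext_iff.trans toClassGroup_eq_iff

theorem idealClass_eq_inv_iff {p q : NormedIdeal u b m} :
    idealClass p = (idealClass q)⁻¹ ↔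
      ∃ z : QuadraticOrder u b, p.ideal * q.ideal = Ideal.span {z} := by
  rw [eq_inv_iff_mul_eq_one, ← map_mul]
  exact Subtype.ext_iff.trans toClassGroup_eq_one_iff

end NormedIdeal

end QuadraticOrder

/-! ### `L`-series of class group characters -/

namespace QuadraticOrder

open scoped QuadraticAlgebra

variable {u b : ℤ} {m : ℕ}

/-- The elements of `J` of norm coprime to `m`. -/
def coprimeElements (J : Ideal (QuadraticOrder u b)) (m : ℕ) : Set (QuadraticOrder u b) :=
  {z | z ∈ J ∧ IsCoprime z.norm (m : ℤ)}

theorem isCoprime_norm_add_mul_intCast_iff {z : QuadraticOrder u b} {i : ℤ} :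
    IsCoprime (QuadraticAlgebra.norm (z + ((m * i : ℤ) : QuadraticOrder u b))) (m : ℤ) ↔
      IsCoprime z.norm (m : ℤ) := by
  have hnorm : QuadraticAlgebra.norm (z + ((m * i : ℤ) : QuadraticOrder u b)) =
      z.norm + m * (2 * i * z.re + b * i * z.im + m * i ^ 2) := by
    rw [QuadraticAlgebra.norm_def, QuadraticAlgebra.norm_def]
    simp only [QuadraticAlgebra.re_add, QuadraticAlgebra.im_add, QuadraticAlgebra.re_intCast,
      QuadraticAlgebra.im_intCast, Int.cast_id]
    ring
  rw [hnorm, IsCoprime.add_mul_left_left_iff]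

variable [hD : Fact (b ^ 2 + 4 * u < 0)]

theorem norm_units (x : (QuadraticOrder u b)ˣ) : (x : QuadraticOrder u b).norm = 1 :=
  (Int.isUnit_iff.1 (x.isUnit.map QuadraticAlgebra.norm)).resolve_right fun h ↦ by
    linarith [QuadraticOrder.norm_nonneg (x : QuadraticOrder u b)]

instance finite_units : Finite (QuadraticOrder u b)ˣ := by
  by_contra h
  rw [not_finite_iff_infinite] at h
  have hsum := (summable_norm_rpow (u := u) (b := b) one_lt_two).comp_injective Units.val_injective
  simp only [Function.comp_def, norm_units, Int.cast_one, Real.one_rpow, summable_const_iff,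
    one_ne_zero] at hsum

theorem tsum_indicator_eq_sum_fiber {α ι : Type*} [Fintype ι] (φ : α → ι) (T : Set α)
    {f : α → ℝ} (hf : Summable f) :
    ∑' z, T.indicator f z = ∑ i, ∑' z, (T ∩ φ ⁻¹' {i}).indicator f z := by
  classical
  rw [← Summable.tsum_finsetSum fun i _ ↦ hf.indicator _]
  refine tsum_congr fun z ↦ ?_
  by_cases hz : z ∈ T <;> simp [Set.indicator_apply, hz]

theorem isBigO_coprimeElements_sub {J : Ideal (QuadraticOrder u b)} {e : ℕ} {t : ℤ}
    (hJ : IsPrimitive J e t) (hem : e.Coprime m) :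
    (fun s : ℝ ↦ e * ∑' z, (coprimeElements J m).indicator (fun z ↦ (z.norm : ℝ) ^ (-s)) z -
      ∑' z, {z : QuadraticOrder u b | IsCoprime z.norm (m : ℤ)}.indicator
        (fun z ↦ (z.norm : ℝ) ^ (-s)) z) =O[𝓝[>] 1] (1 : ℝ → ℝ) := by
  have : NeZero e := ⟨hJ.isNorm.pos.ne'⟩
  set T := {z : QuadraticOrder u b | IsCoprime z.norm (m : ℤ)}
  -- `J` is the fiber of `φ` over `0`; translation by `w i` carries it to the fiber over `i`.
  set φ : QuadraticOrder u b → ZMod e := fun z ↦ (z.re + t * z.im : ℤ)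
  let w (i : ZMod e) : QuadraticOrder u b :=
    ((m * (i * (m : ZMod e)⁻¹).val : ℤ) : QuadraticOrder u b)
  have hφ (i : ZMod e) (z) : φ (z + w i) = φ z + i := by
    have hm : (m : ZMod e) * (m : ZMod e)⁻¹ = 1 := ZMod.coe_mul_inv_eq_one m hem.symm
    simp only [φ, w, QuadraticAlgebra.re_add, QuadraticAlgebra.im_add, QuadraticAlgebra.re_intCast,
      QuadraticAlgebra.im_intCast]
    push_cast
    rw [ZMod.natCast_zmod_val]
    linear_combination i * hm
  have hmem (i : ZMod e) (z) : z + w i ∈ T ∩ φ ⁻¹' {i} ↔ z ∈ coprimeElements J m := by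
    simp only [Set.mem_inter_iff, Set.mem_preimage, Set.mem_singleton_iff, hφ, add_eq_right]
    rw [and_comm]
    refine and_congr ?_ isCoprime_norm_add_mul_intCast_iff
    rw [hJ.mem_iff, ZMod.intCast_zmod_eq_zero_iff_dvd]
  have hfiber (s : ℝ) (i : ZMod e) :
      ∑' z, (T ∩ φ ⁻¹' {i}).indicator (fun z ↦ (z.norm : ℝ) ^ (-s)) z =
        ∑' z, (coprimeElements J m).indicator (fun z ↦ ((z + w i).norm : ℝ) ^ (-s)) z := by
    rw [← (Equiv.addRight (w i)).tsum_eq]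
    refine tsum_congr fun z ↦ ?_
    classical simp only [Equiv.coe_addRight, Set.indicator_apply, hmem]
  have hO := IsBigO.fun_sum fun (i : ZMod e) (_ : i ∈ Finset.univ) ↦
    isBigO_tsum_indicator_sub_shift (coprimeElements J m) (w i)
  refine hO.congr' ?_ EventuallyEq.rfl
  filter_upwards [self_mem_nhdsWithin] with s hs
  rw [tsum_indicator_eq_sum_fiber φ T (summable_norm_rpow hs), Finset.sum_sub_distrib,
    Finset.sum_const, Finset.card_univ, ZMod.card, nsmul_eq_mul]
  simp only [hfiber]

namespace NormedIdeal

theorem exists_isPrimitive (g : idealClassGroup u b m) :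
    ∃ (q : NormedIdeal u b m) (t : ℤ), idealClass q = g ∧ IsPrimitive q.ideal q.absNorm t := by
  obtain ⟨p, rfl⟩ := idealClass_surjective g
  obtain ⟨k, e, t, J, hk, hn, hI, hJ⟩ := p.isNorm.exists_isPrimitive
  have hem : e.Coprime m := p.coprime.coprime_dvd_left (Dvd.intro_left _ hn.symm)
  refine ⟨mk J e hJ.isNorm hem, t, idealClass_eq_iff.2 ⟨k, 1, ?_, one_ne_zero, ?_⟩, hJ⟩
  · exact Nat.cast_ne_zero.2 hk.ne'
  · rw [hI, Ideal.span_singleton_one, Ideal.top_mul]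
    rfl

section Generator

variable (q : NormedIdeal u b m) (p : {p : NormedIdeal u b m // idealClass p = (idealClass q)⁻¹})

/-- A generator of the principal ideal `p.ideal * q.ideal`, for `p` in the inverse class of `q`. -/
noncomputable def gen : QuadraticOrder u b := (idealClass_eq_inv_iff.1 p.2).choose

theorem ideal_mul_ideal_eq_span_gen : p.1.ideal * q.ideal = Ideal.span {gen q p} :=
  (idealClass_eq_inv_iff.1 p.2).choose_spec

theorem norm_gen : (gen q p).norm = (p.1.absNorm * q.absNorm : ℕ) :=
  (p.1.isNorm.mul q.isNorm).norm_eq (ideal_mul_ideal_eq_span_gen q p)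

theorem gen_ne_zero : gen q p ≠ 0 := fun h ↦ by
  have hnorm := norm_gen q p
  rw [h, QuadraticAlgebra.norm_zero, eq_comm, Nat.cast_eq_zero] at hnorm
  exact (mul_pos p.1.absNorm_pos q.absNorm_pos).ne' hnorm

theorem norm_units_mul_gen (x : (QuadraticOrder u b)ˣ) :
    QuadraticAlgebra.norm ((x : QuadraticOrder u b) * gen q p) = (p.1.absNorm * q.absNorm : ℕ) := by
  rw [map_mul, norm_units, one_mul, norm_gen]

theorem units_mul_gen_mem_coprimeElements (x : (QuadraticOrder u b)ˣ) :
    (x : QuadraticOrder u b) * gen q p ∈ coprimeElements q.ideal m := by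
  constructor
  · refine Ideal.mul_mem_left _ _ (Ideal.mul_le_right (I := p.1.ideal) ?_)
    rw [ideal_mul_ideal_eq_span_gen]
    exact Ideal.mem_span_singleton_self _
  · rw [norm_units_mul_gen, Nat.isCoprime_iff_coprime]
    exact p.1.coprime.mul_left q.coprime

end Generator

variable (q : NormedIdeal u b m)

theorem injective_units_mul_gen : Function.Injective
    fun x : {p : NormedIdeal u b m // idealClass p = (idealClass q)⁻¹} × (QuadraticOrder u b)ˣ ↦
      (x.2 : QuadraticOrder u b) * gen q x.1 := by
  rintro ⟨p, x⟩ ⟨p', x'⟩ h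
  have hspan : Ideal.span {gen q p} = Ideal.span {gen q p'} := by
    rw [← Ideal.span_singleton_mul_left_unit x.isUnit (gen q p),
      ← Ideal.span_singleton_mul_left_unit x'.isUnit (gen q p')]
    exact congrArg (fun z ↦ Ideal.span {z}) h
  obtain rfl : p = p' := by
    refine Subtype.ext (ideal_injective (q.isNorm.mul_right_inj.1 ?_))
    rw [mul_comm, ideal_mul_ideal_eq_span_gen, hspan, ← ideal_mul_ideal_eq_span_gen, mul_comm]
  exact Prod.ext rfl (Units.ext (mul_right_cancel₀ (gen_ne_zero q p) h))

theorem exists_units_mul_gen_eq (hm : 1 < m) {z : QuadraticOrder u b}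
    (hz : z ∈ coprimeElements q.ideal m) :
    ∃ (p : {p : NormedIdeal u b m // idealClass p = (idealClass q)⁻¹})
      (x : (QuadraticOrder u b)ˣ), (x : QuadraticOrder u b) * gen q p = z := by
  have hz0 : z ≠ 0 := by
    rintro rfl
    have := hz.2
    rw [QuadraticAlgebra.norm_zero, isCoprime_zero_left, Int.isUnit_iff] at this
    omega
  obtain ⟨I, n, hI, hIq⟩ := q.isNorm.exists_mul_eq_span hz0 hz.1
  have hnm : n.Coprime m := by
    have := hz.2
    rw [(hI.mul q.isNorm).norm_eq hIq, Nat.isCoprime_iff_coprime] at this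
    exact this.coprime_mul_right
  let p : {p : NormedIdeal u b m // idealClass p = (idealClass q)⁻¹} :=
    ⟨mk I n hI hnm, idealClass_eq_inv_iff.2 ⟨z, hIq⟩⟩
  obtain ⟨x, hx⟩ := Ideal.span_singleton_eq_span_singleton.1
    ((ideal_mul_ideal_eq_span_gen q p).symm.trans hIq)
  exact ⟨p, x, by rw [mul_comm, hx]⟩

/-- Every element of `q.ideal` of norm coprime to `m` is, uniquely, a unit multiple of a generator
of `p.ideal * q.ideal` for some `p` in the inverse class of `q`. -/
noncomputable def equivCoprimeElements (hm : 1 < m) :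
    {p : NormedIdeal u b m // idealClass p = (idealClass q)⁻¹} × (QuadraticOrder u b)ˣ ≃
      coprimeElements q.ideal m :=
  Equiv.ofBijective (fun x ↦ ⟨x.2 * gen q x.1, units_mul_gen_mem_coprimeElements q x.1 x.2⟩)
    ⟨fun _ _ h ↦ injective_units_mul_gen q (congrArg Subtype.val h), fun z ↦
      let ⟨p, x, h⟩ := exists_units_mul_gen_eq q hm z.2
      ⟨(p, x), Subtype.ext h⟩⟩

theorem norm_equivCoprimeElements_rpow (hm : 1 < m) (s : ℝ)
    (x : {p : NormedIdeal u b m // idealClass p = (idealClass q)⁻¹} × (QuadraticOrder u b)ˣ) :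
    ((equivCoprimeElements q hm x).1.norm : ℝ) ^ (-s) =
      (q.absNorm : ℝ) ^ (-s) * (x.1.1.absNorm : ℝ) ^ (-s) := by
  have hnorm : (equivCoprimeElements q hm x).1.norm = (x.1.1.absNorm * q.absNorm : ℕ) :=
    norm_units_mul_gen q x.1 x.2
  rw [hnorm, Int.cast_natCast, Nat.cast_mul, Real.mul_rpow (Nat.cast_nonneg _) (Nat.cast_nonneg _),
    mul_comm]

/-- The partial zeta function of an ideal class. -/
noncomputable def classSeries (g : idealClassGroup u b m) (s : ℝ) : ℝ :=
  ∑' p : {p : NormedIdeal u b m // idealClass p = g}, (p.1.absNorm : ℝ) ^ (-s)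

theorem summable_units_absNorm_rpow (hm : 1 < m) {s : ℝ} (hs : 1 < s) :
    Summable fun x : {p : NormedIdeal u b m // idealClass p = (idealClass q)⁻¹} ×
      (QuadraticOrder u b)ˣ ↦ (x.1.1.absNorm : ℝ) ^ (-s) := by
  have hsum := (equivCoprimeElements q hm).summable_iff.2
    ((summable_norm_rpow hs).comp_injective Subtype.val_injective)
  have hq : (q.absNorm : ℝ) ^ (-s) ≠ 0 :=
    (Real.rpow_pos_of_pos (Nat.cast_pos.2 q.absNorm_pos) _).ne'
  exact (summable_mul_left_iff hq).1 (hsum.congr (norm_equivCoprimeElements_rpow q hm s))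

theorem card_units_mul_classSeries (hm : 1 < m) {s : ℝ} (hs : 1 < s) :
    Nat.card (QuadraticOrder u b)ˣ * classSeries (idealClass q)⁻¹ s = (q.absNorm : ℝ) ^ s *
      ∑' z, (coprimeElements q.ideal m).indicator (fun z ↦ (z.norm : ℝ) ^ (-s)) z := by
  have := Fintype.ofFinite (QuadraticOrder u b)ˣ
  have hq : (0 : ℝ) < q.absNorm := Nat.cast_pos.2 q.absNorm_pos
  have hprod : ∑' z, (coprimeElements q.ideal m).indicator (fun z ↦ (z.norm : ℝ) ^ (-s)) z =
      (q.absNorm : ℝ) ^ (-s) *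
        ∑' x : {p : NormedIdeal u b m // idealClass p = (idealClass q)⁻¹} × (QuadraticOrder u b)ˣ,
          (x.1.1.absNorm : ℝ) ^ (-s) := by
    rw [← tsum_subtype, ← (equivCoprimeElements q hm).tsum_eq, ← tsum_mul_left]
    exact tsum_congr (norm_equivCoprimeElements_rpow q hm s)
  rw [hprod, ← mul_assoc, ← Real.rpow_add hq, add_neg_cancel, Real.rpow_zero, one_mul,
    (summable_units_absNorm_rpow q hm hs).tsum_prod, classSeries, ← tsum_mul_left]
  refine tsum_congr fun p ↦ ?_
  rw [tsum_fintype]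
  simp only [Finset.sum_const, nsmul_eq_mul, Finset.card_univ, Nat.card_eq_fintype_card]

theorem summable_classSeries (hm : 1 < m) (g : idealClassGroup u b m) {s : ℝ} (hs : 1 < s) :
    Summable fun p : {p : NormedIdeal u b m // idealClass p = g} ↦ (p.1.absNorm : ℝ) ^ (-s) := by
  obtain ⟨q, hq⟩ := idealClass_surjective g⁻¹
  obtain rfl : g = (idealClass q)⁻¹ := by rw [hq, inv_inv]
  exact (summable_units_absNorm_rpow q hm hs).comp_injective (i := fun p ↦ (p, 1))
    fun _ _ h ↦ congrArg Prod.fst h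

theorem summable_absNorm_rpow (hm : 1 < m) {s : ℝ} (hs : 1 < s) :
    Summable fun p : NormedIdeal u b m ↦ (p.absNorm : ℝ) ^ (-s) := by
  rw [← (Equiv.sigmaFiberEquiv (idealClass : NormedIdeal u b m → _)).summable_iff]
  refine (summable_sigma_of_nonneg fun _ ↦ Real.rpow_nonneg (Nat.cast_nonneg _) _).2
    ⟨fun g ↦ summable_classSeries hm g hs, Summable.of_finite⟩

theorem isBigO_card_units_mul_classSeries_sub (hm : 1 < m) (g : idealClassGroup u b m) :
    (fun s : ℝ ↦ Nat.card (QuadraticOrder u b)ˣ * classSeries g s -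
      ∑' z, {z : QuadraticOrder u b | IsCoprime z.norm (m : ℤ)}.indicator
        (fun z ↦ (z.norm : ℝ) ^ (-s)) z) =O[𝓝[>] 1] (1 : ℝ → ℝ) := by
  obtain ⟨q, t, hq, hqt⟩ := exists_isPrimitive g⁻¹
  obtain rfl : g = (idealClass q)⁻¹ := by rw [hq, inv_inv]
  have hq0 : (q.absNorm : ℝ) ≠ 0 := Nat.cast_ne_zero.2 q.absNorm_pos.ne'
  have hdiff : DifferentiableAt ℝ (fun s : ℝ ↦ (q.absNorm : ℝ) ^ (s - 1)) 1 :=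
    DifferentiableAt.rpow (by fun_prop) (by fun_prop) hq0
  have hsub : (fun s : ℝ ↦ (q.absNorm : ℝ) ^ (s - 1) - 1) =O[𝓝[>] 1] fun s ↦ s - 1 := by
    simpa only [sub_self, Real.rpow_zero] using hdiff.isBigO_sub.mono nhdsWithin_le_nhds
  have hfirst := ((hdiff.continuousAt.isBigO_one ℝ).mono nhdsWithin_le_nhds).mul
    (isBigO_coprimeElements_sub hqt q.coprime)
  have hsecond := hsub.mul
    (isBigO_tsum_indicator_norm_rpow {z : QuadraticOrder u b | IsCoprime z.norm (m : ℤ)})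
  have hcancel : (fun s : ℝ ↦ (s - 1) * (s - 1)⁻¹) =ᶠ[𝓝[>] 1] (1 : ℝ → ℝ) := by
    filter_upwards [self_mem_nhdsWithin] with s hs
    exact mul_inv_cancel₀ (sub_ne_zero.2 (ne_of_gt hs))
  simp only [Pi.one_apply, one_mul] at hfirst
  refine (hfirst.add (hsecond.trans_eventuallyEq hcancel)).congr' ?_ EventuallyEq.rfl
  filter_upwards [self_mem_nhdsWithin] with s hs
  rw [card_units_mul_classSeries q hm hs, show s = s - 1 + 1 by ring, Real.rpow_add_one hq0]
  simp only [sub_add_cancel]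
  ring

/-- The completely multiplicative weight `χ(I) N(I)⁻ˢ` whose sum is the `L`-series of the class
group character `χ`. -/
noncomputable def weight (χ : idealClassGroup u b m →* ℂ) (s : ℝ) : NormedIdeal u b m →* ℂ where
  toFun I := χ (idealClass I) * ((I.absNorm : ℝ) ^ (-s) : ℝ)
  map_one' := by simp [absNorm_one]
  map_mul' I J := by
    rw [map_mul, map_mul, absNorm_mul, Nat.cast_mul,
      Real.mul_rpow (Nat.cast_nonneg _) (Nat.cast_nonneg _), Complex.ofReal_mul]
    ring

theorem weight_apply (χ : idealClassGroup u b m →* ℂ) (s : ℝ) (I : NormedIdeal u b m) :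
    weight χ s I = χ (idealClass I) * ((I.absNorm : ℝ) ^ (-s) : ℝ) :=
  rfl

/-- The `L`-series of a character `χ` of the class group, over the invertible ideals of norm coprime
to `m`. -/
noncomputable def lSeries (χ : idealClassGroup u b m →* ℂ) (s : ℝ) : ℂ :=
  ∑' I : NormedIdeal u b m, weight χ s I

theorem norm_character_apply (χ : idealClassGroup u b m →* ℂ) (g : idealClassGroup u b m) :
    ‖χ g‖ = 1 :=
  (χ.isOfFinOrder (isOfFinOrder_of_finite g)).norm_eq_one

theorem norm_weight (χ : idealClassGroup u b m →* ℂ) (s : ℝ) (I : NormedIdeal u b m) :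
    ‖weight χ s I‖ = (I.absNorm : ℝ) ^ (-s) := by
  rw [weight_apply, norm_mul, norm_character_apply, one_mul, Complex.norm_real,
    Real.norm_of_nonneg (Real.rpow_nonneg (Nat.cast_nonneg _) _)]

theorem summable_weight (hm : 1 < m) (χ : idealClassGroup u b m →* ℂ) {s : ℝ} (hs : 1 < s) :
    Summable (weight χ s) :=
  .of_norm_bounded (summable_absNorm_rpow hm hs) fun I ↦ (norm_weight χ s I).le

theorem lSeries_eq_sum [Fintype (idealClassGroup u b m)] (hm : 1 < m)
    (χ : idealClassGroup u b m →* ℂ) {s : ℝ} (hs : 1 < s) :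
    lSeries χ s = ∑ g, χ g * classSeries g s := by
  have hsum := (Equiv.sigmaFiberEquiv (idealClass : NormedIdeal u b m → _)).summable_iff.2
    (summable_weight hm χ hs)
  rw [lSeries, ← (Equiv.sigmaFiberEquiv (idealClass : NormedIdeal u b m → _)).tsum_eq,
    Summable.tsum_sigma (by exact hsum), tsum_fintype]
  refine Finset.sum_congr rfl fun g _ ↦ ?_
  rw [classSeries, Complex.ofReal_tsum, ← tsum_mul_left]
  refine tsum_congr fun p ↦ ?_
  simp only [Equiv.sigmaFiberEquiv_apply, weight_apply, p.2]

theorem isBigO_card_units_mul_lSeries_sub [Fintype (idealClassGroup u b m)] (hm : 1 < m)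
    (χ : idealClassGroup u b m →* ℂ) :
    (fun s : ℝ ↦ (Nat.card (QuadraticOrder u b)ˣ : ℂ) * lSeries χ s - (∑ g, χ g) *
      (∑' z, {z : QuadraticOrder u b | IsCoprime z.norm (m : ℤ)}.indicator
        (fun z ↦ (z.norm : ℝ) ^ (-s)) z : ℝ)) =O[𝓝[>] 1] (1 : ℝ → ℝ) := by
  have hO := IsBigO.fun_sum fun (g : idealClassGroup u b m) (_ : g ∈ Finset.univ) ↦
    (Complex.isBigO_ofReal_left.2 (isBigO_card_units_mul_classSeries_sub hm g)).const_mul_left (χ g)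
  refine hO.congr' ?_ EventuallyEq.rfl
  filter_upwards [self_mem_nhdsWithin] with s hs
  rw [lSeries_eq_sum hm χ hs, Finset.mul_sum, Finset.sum_mul, ← Finset.sum_sub_distrib]
  refine Finset.sum_congr rfl fun g _ ↦ ?_
  push_cast
  ring

theorem lSeries_isBigO_one (hm : 1 < m) {χ : idealClassGroup u b m →* ℂ} (hχ : χ ≠ 1) :
    lSeries χ =O[𝓝[>] 1] (1 : ℝ → ℝ) := by
  have := Fintype.ofFinite (idealClassGroup u b m)
  have hO := isBigO_card_units_mul_lSeries_sub hm χ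
  simp only [sum_hom_units_eq_zero χ hχ, zero_mul, sub_zero] at hO
  exact (isBigO_const_mul_left_iff (Nat.cast_ne_zero.2 Nat.card_pos.ne')).1 hO

theorem isBigO_inv_lSeries_one (hm : 1 < m) :
    (fun s : ℝ ↦ (s - 1)⁻¹) =O[𝓝[>] 1] lSeries (1 : idealClassGroup u b m →* ℂ) := by
  have := Fintype.ofFinite (idealClassGroup u b m)
  have hlim : Tendsto (fun s : ℝ ↦ ‖(s - 1)⁻¹‖) (𝓝[>] 1) atTop := by
    refine tendsto_norm_atTop_atTop.comp (tendsto_inv_nhdsGT_zero.comp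
      (tendsto_nhdsWithin_iff.2 ⟨?_, ?_⟩))
    · exact ((continuous_sub_right (1 : ℝ)).tendsto' _ _ (sub_self 1)).mono_left
        nhdsWithin_le_nhds
    · filter_upwards [self_mem_nhdsWithin] with s hs
      exact sub_pos.2 (Set.mem_Ioi.1 hs)
  have hpole := Complex.isBigO_ofReal_right.2
    (isBigO_inv_tsum_indicator_isCoprime_norm (u := u) (b := b) hm)
  have hcard : (∑ g, (1 : idealClassGroup u b m →* ℂ) g) ≠ 0 := by
    simp [Fintype.card_ne_zero]
  have hmain := hpole.trans (isBigO_self_const_mul hcard _ _)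
  have hsmall := (isBigO_card_units_mul_lSeries_sub (u := u) (b := b) hm 1).trans_isLittleO
    (((isLittleO_one_left_iff ℝ).2 hlim).trans_isBigO hmain)
  exact (isBigO_const_mul_right_iff (Nat.cast_ne_zero.2 Nat.card_pos.ne')).1
    (hmain.trans (IsEquivalent.isBigO_symm hsmall))

end NormedIdeal

end QuadraticOrder

/-! ### Ideals of prime power norm -/

section CoprimeElements

variable {R : Type*} [CommRing R] {I J : Ideal R} {x y : R}

theorem mul_sup_span_singleton_eq_left (h : IsCoprime x y) (hx : x ∈ I) (hy : y ∈ J) :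
    I * J ⊔ Ideal.span {x} = I := by
  have hJ : Ideal.span {x} ⊔ J = ⊤ := top_le_iff.1 <|
    (Ideal.isCoprime_iff_sup_eq.1 ((Ideal.isCoprime_span_singleton_iff x y).2 h)).symm.le.trans
      (sup_le_sup_left ((Ideal.span_singleton_le_iff_mem J).2 hy) _)
  rw [sup_comm, Ideal.sup_mul_eq_of_coprime_right hJ,
    sup_eq_right.2 ((Ideal.span_singleton_le_iff_mem I).2 hx)]

theorem sup_span_singleton_mul_sup_span_singleton (h : IsCoprime x y) (hxy : x * y ∈ I) :
    (I ⊔ Ideal.span {x}) * (I ⊔ Ideal.span {y}) = I := by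
  have htop : Ideal.span {x} ⊔ Ideal.span {y} = ⊤ :=
    Ideal.isCoprime_iff_sup_eq.1 ((Ideal.isCoprime_span_singleton_iff x y).2 h)
  apply le_antisymm
  · rw [Ideal.sup_mul, Ideal.mul_sup, Ideal.mul_sup, Ideal.span_singleton_mul_span_singleton]
    exact sup_le (sup_le Ideal.mul_le_left Ideal.mul_le_left)
      (sup_le Ideal.mul_le_right ((Ideal.span_singleton_le_iff_mem I).2 hxy))
  · calc I = Ideal.span {x} * I ⊔ I * Ideal.span {y} := by
          rw [mul_comm I, ← Ideal.sup_mul, htop, Ideal.top_mul]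
      _ ≤ _ := sup_le (Ideal.mul_mono le_sup_right le_sup_left)
          (Ideal.mul_mono le_sup_left le_sup_right)

end CoprimeElements

theorem jacobiSym_eq_neg_one_of_four_mul_dvd_add_one {D : ℤ} (hD : D < 0) {p : ℕ}
    (h : 4 * D.natAbs ∣ p + 1) : jacobiSym D p = -1 := by
  obtain ⟨k, hk⟩ := h
  set n := 4 * D.natAbs - 1 with hn
  have hmod : p % (4 * D.natAbs) = n := by
    obtain ⟨j, rfl⟩ : ∃ j, k = j + 1 := Nat.exists_eq_succ_of_ne_zero (by rintro rfl; omega)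
    obtain rfl : p = n + 4 * D.natAbs * j := by rw [mul_add_one] at hk; omega
    rw [Nat.add_mul_mod_self_left, Nat.mod_eq_of_lt (by omega)]
  have hp : Odd p := by
    rw [mul_assoc] at hk
    exact Nat.not_even_iff_odd.1 (by rw [Nat.even_iff]; omega)
  have hodd : Odd n := Nat.not_even_iff_odd.1 (by rw [Nat.even_iff]; omega)
  have hfour : jacobiSym 4 n = 1 :=
    jacobiSym.sq_one' (a := 2) (by exact_mod_cast Nat.coprime_two_left.2 hodd)
  calc jacobiSym D p = jacobiSym (4 * D) n := by
        rw [jacobiSym.mod_right _ hp, hmod, jacobiSym.mul_left, hfour, one_mul]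
    _ = jacobiSym (-1) n :=
        jacobiSym.mod_left' (Int.modEq_iff_dvd.2 (dvd_of_eq (by omega)))
    _ = -1 := by
        rw [jacobiSym.at_neg_one hodd, ZMod.χ₄_nat_three_mod_four (by omega)]

namespace QuadraticOrder

variable {u b : ℤ} {I J K : Ideal (QuadraticOrder u b)}

theorem IsNorm.sup_span {n k : ℕ} (h : n.Coprime k) (hI : IsNorm I (n * k)) :
    IsNorm (I ⊔ Ideal.span {(n : QuadraticOrder u b)}) n where
  pos := Nat.pos_of_mul_pos_right hI.pos
  mul_conj := by
    have htop := Ideal.isCoprime_iff_sup_eq.1 ((Ideal.isCoprime_span_singleton_iff _ _).2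
      (h.cast (R := QuadraticOrder u b)))
    have hmul : Ideal.span {(n : QuadraticOrder u b)} * Ideal.span {(k : QuadraticOrder u b)} =
        I * QuadraticOrder.conj I := by
      rw [Ideal.span_singleton_mul_span_singleton, hI.mul_conj, Nat.cast_mul]
    rw [conj_sup, conj_span_natCast, Ideal.sup_mul, Ideal.mul_sup, Ideal.mul_sup]
    apply le_antisymm
    · rw [← hmul]
      exact sup_le (sup_le Ideal.mul_le_left Ideal.mul_le_right)
        (sup_le Ideal.mul_le_left Ideal.mul_le_left)
    · calc Ideal.span {(n : QuadraticOrder u b)}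
          = Ideal.span {(n : QuadraticOrder u b)} * Ideal.span {(n : QuadraticOrder u b)} ⊔
              I * QuadraticOrder.conj I := by rw [← hmul, ← Ideal.mul_sup, htop, Ideal.mul_top]
        _ ≤ _ := sup_le (le_sup_right.trans le_sup_right) (le_sup_left.trans le_sup_left)

namespace IsPrimitive

variable {e : ℕ} {t t' : ℤ}

theorem conj (h : IsPrimitive J e t) : IsPrimitive (conj J) e (b - t) where
  isNorm := h.isNorm.conj
  mem_iff z := by
    rw [mem_conj, h.mem_iff, QuadraticAlgebra.re_star, QuadraticAlgebra.im_star]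
    ring_nf

theorem eq_of_dvd_sub (h : IsPrimitive J e t) (h' : IsPrimitive K e t') (hd : (e : ℤ) ∣ t - t') :
    J = K := by
  ext z
  rw [h.mem_iff, h'.mem_iff, dvd_iff_dvd_of_dvd_sub]
  exact (hd.mul_right z.im).trans (dvd_of_eq (by ring))

theorem isSquare_discr (h : IsPrimitive J e t) : IsSquare ((b ^ 2 + 4 * u : ℤ) : ZMod e) := by
  have hdvd : ((t ^ 2 - b * t - u : ℤ) : ZMod e) = 0 :=
    (ZMod.intCast_zmod_eq_zero_iff_dvd _ _).2 h.dvd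
  refine ⟨((2 * t - b : ℤ) : ZMod e), ?_⟩
  push_cast at hdvd ⊢
  linear_combination -4 * hdvd

theorem eq_or_eq_conj {p r : ℕ} (hp : p.Prime) (hD : ¬ (p : ℤ) ∣ b ^ 2 + 4 * u)
    (h : IsPrimitive J (p ^ r) t) (h' : IsPrimitive K (p ^ r) t') :
    J = K ∨ J = QuadraticOrder.conj K := by
  rcases eq_or_ne r 0 with rfl | hr
  · exact .inl (h.eq_of_dvd_sub h' (by simp))
  have hprime : Prime (p : ℤ) := Nat.prime_iff_prime_int.1 hp
  have hmul : (p : ℤ) ^ r ∣ (t - t') * (t - (b - t')) := by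
    have := dvd_sub h.dvd h'.dvd
    push_cast at this
    exact this.trans (dvd_of_eq (by ring))
  by_cases h1 : (p : ℤ) ∣ t - t'
  · have h2 : ¬ (p : ℤ) ∣ t - (b - t') := by
      intro h2
      have hpt : (p : ℤ) ∣ t ^ 2 - b * t - u :=
        (Int.natCast_dvd_natCast.2 (dvd_pow_self p hr)).trans h.dvd
      have hsum := ((dvd_add h1 h2).mul_right (t - t' + (t - (b - t')))).sub (hpt.mul_left 4)
      exact hD (hsum.trans (dvd_of_eq (by ring)))
    exact .inl (h.eq_of_dvd_sub h' (by exact_mod_cast hprime.pow_dvd_of_dvd_mul_right r h2 hmul))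
  · exact .inr (h.eq_of_dvd_sub h'.conj
      (by exact_mod_cast hprime.pow_dvd_of_dvd_mul_left r h1 hmul))

end IsPrimitive

theorem exists_finset_isPrimitive_prime_pow {p : ℕ} (hp : p.Prime)
    (hD : ¬ (p : ℤ) ∣ b ^ 2 + 4 * u) (r : ℕ) :
    ∃ A : Finset (Ideal (QuadraticOrder u b)), A.card ≤ 2 ∧
      ∀ J t, IsPrimitive J (p ^ r) t → J ∈ A := by
  classical
  by_cases h : ∃ (K : Ideal (QuadraticOrder u b)) (t : ℤ), IsPrimitive K (p ^ r) t
  · obtain ⟨K, t, hK⟩ := h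
    refine ⟨{K, conj K}, Finset.card_le_two, fun J t' hJ ↦ ?_⟩
    simpa using hJ.eq_or_eq_conj hp hD hK
  · push Not at h
    exact ⟨∅, by simp, fun J t hJ ↦ (h J t hJ).elim⟩

variable [hD : Fact (b ^ 2 + 4 * u < 0)]

theorem IsNorm.exists_eq_span_pow_mul {p k : ℕ} (hp : p.Prime) (h : IsNorm I (p ^ k)) :
    ∃ (i : ℕ) (t : ℤ) (J : Ideal (QuadraticOrder u b)), 2 * i ≤ k ∧
      I = Ideal.span {((p ^ i : ℕ) : QuadraticOrder u b)} * J ∧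
      IsPrimitive J (p ^ (k - 2 * i)) t := by
  obtain ⟨c, e, t, J, -, hc, rfl, hJ⟩ := h.exists_isPrimitive
  obtain ⟨i, -, rfl⟩ := (Nat.dvd_prime_pow hp).1
    ((dvd_pow_self c two_ne_zero).trans (Dvd.intro e hc.symm))
  have hi : 2 * i ≤ k := by
    rw [← Nat.pow_dvd_pow_iff_le_right hp.one_lt, mul_comm, pow_mul]
    exact Dvd.intro e hc.symm
  obtain rfl : e = p ^ (k - 2 * i) := by
    refine Nat.eq_of_mul_eq_mul_left (pow_pos hp.pos (2 * i)) ?_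
    rw [← pow_add, Nat.add_sub_cancel' hi, hc, mul_comm 2, pow_mul]
  exact ⟨i, t, J, hi, rfl, hJ⟩

theorem card_le_of_isNorm_prime_pow {p k : ℕ} (hp : p.Prime) (hpD : ¬ (p : ℤ) ∣ b ^ 2 + 4 * u)
    {S : Finset (Ideal (QuadraticOrder u b))} (hS : ∀ I ∈ S, IsNorm I (p ^ k)) :
    S.card ≤ (k / 2 + 1) * 2 := by
  classical
  choose A hA hmem using exists_finset_isPrimitive_prime_pow (u := u) (b := b) hp hpD
  let B (i : ℕ) := (A (k - 2 * i)).image (Ideal.span {((p ^ i : ℕ) : QuadraticOrder u b)} * ·)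
  have hSB : S ⊆ (Finset.range (k / 2 + 1)).biUnion B := by
    intro I hI
    obtain ⟨i, t, J, hi, rfl, hJ⟩ := (hS I hI).exists_eq_span_pow_mul hp
    exact Finset.mem_biUnion.2 ⟨i, Finset.mem_range.2 (by omega),
      Finset.mem_image_of_mem _ (hmem _ J t hJ)⟩
  refine (Finset.card_le_card hSB).trans ((Finset.card_biUnion_le_card_mul _ B 2 fun i _ ↦
    Finset.card_image_le.trans (hA _)).trans_eq ?_)
  rw [Finset.card_range]

theorem not_isNorm_of_four_mul_dvd_add_one {p : ℕ} (hp : p.Prime)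
    (h : 4 * (b ^ 2 + 4 * u).natAbs ∣ p + 1) : ¬ IsNorm I p := by
  intro hI
  obtain ⟨i, t, J, hi, -, hJ⟩ := IsNorm.exists_eq_span_pow_mul (k := 1) hp (by rwa [pow_one])
  obtain rfl : i = 0 := by omega
  rw [mul_zero, Nat.sub_zero, pow_one] at hJ
  have := Fact.mk hp
  have hjac := jacobiSym_eq_neg_one_of_four_mul_dvd_add_one hD.out h
  rw [← jacobiSym.legendreSym.to_jacobiSym, legendreSym.eq_neg_one_iff] at hjac
  exact hjac hJ.isSquare_discr

namespace NormedIdeal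

variable {m : ℕ}

theorem finite_absNorm_eq (n : ℕ) : {I : NormedIdeal u b m | I.absNorm = n}.Finite := by
  rcases eq_or_ne n 0 with rfl | hn
  · exact Set.finite_empty.subset fun I hI ↦ I.absNorm_pos.ne' hI
  · refine Set.Finite.of_finite_image (f := ideal) ?_ (fun I _ J _ h ↦ ideal_injective h)
    refine (Ring.HasFiniteQuotients.finite_setOfPred_mem (n : QuadraticOrder u b)
      (by exact_mod_cast hn)).subset ?_
    rintro _ ⟨I, rfl, rfl⟩
    exact I.isNorm.natCast_mem

variable (u b m) in
/-- The finite set of ideals of norm `n`. -/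
noncomputable def withNorm (n : ℕ) : Finset (NormedIdeal u b m) := (finite_absNorm_eq n).toFinset

@[simp]
theorem mem_withNorm {n : ℕ} {I : NormedIdeal u b m} : I ∈ withNorm u b m n ↔ I.absNorm = n := by
  simp [withNorm]

theorem isNorm_of_mem_withNorm {n : ℕ} {I : NormedIdeal u b m} (h : I ∈ withNorm u b m n) :
    IsNorm I.ideal n :=
  mem_withNorm.1 h ▸ I.isNorm

theorem withNorm_zero : withNorm u b m 0 = ∅ :=
  Finset.eq_empty_of_forall_notMem fun _ hI ↦ (isNorm_of_mem_withNorm hI).pos.false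

theorem withNorm_one : withNorm u b m 1 = {1} := by
  ext I
  rw [mem_withNorm, Finset.mem_singleton]
  refine ⟨fun h ↦ ideal_injective ?_, fun h ↦ by rw [h, absNorm_one]⟩
  rw [ideal_one, Ideal.one_eq_top, Ideal.eq_top_iff_one]
  simpa [h] using I.isNorm.natCast_mem

theorem withNorm_eq_empty_of_not_coprime {n : ℕ} (h : ¬ n.Coprime m) : withNorm u b m n = ∅ :=
  Finset.eq_empty_of_forall_notMem fun I hI ↦ h (mem_withNorm.1 hI ▸ I.coprime)

theorem withNorm_eq_empty_of_four_mul_dvd_add_one {p : ℕ} (hp : p.Prime)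
    (h : 4 * (b ^ 2 + 4 * u).natAbs ∣ p + 1) : withNorm u b m p = ∅ :=
  Finset.eq_empty_of_forall_notMem fun _ hI ↦
    not_isNorm_of_four_mul_dvd_add_one hp h (isNorm_of_mem_withNorm hI)

theorem card_withNorm_prime_pow_le {p : ℕ} (hp : p.Prime) (hpD : ¬ (p : ℤ) ∣ b ^ 2 + 4 * u)
    (k : ℕ) : (withNorm u b m (p ^ k)).card ≤ (k / 2 + 1) * 2 := by
  classical
  rw [← Finset.card_image_of_injective _ ideal_injective]
  exact card_le_of_isNorm_prime_pow hp hpD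
    (Finset.forall_mem_image.2 fun I hI ↦ isNorm_of_mem_withNorm hI)

theorem eq_of_mul_eq_mul_of_coprime {n k : ℕ} (h : n.Coprime k) {I I' J J' : NormedIdeal u b m}
    (hI : I ∈ withNorm u b m n) (hI' : I' ∈ withNorm u b m n) (hJ : J ∈ withNorm u b m k)
    (hJ' : J' ∈ withNorm u b m k) (heq : I * J = I' * J') : I = I' := by
  have hco := h.cast (R := QuadraticOrder u b)
  have hmul : I.ideal * J.ideal = I'.ideal * J'.ideal := congrArg ideal heq
  refine ideal_injective ?_
  rw [← mul_sup_span_singleton_eq_left hco (isNorm_of_mem_withNorm hI).natCast_mem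
      (isNorm_of_mem_withNorm hJ).natCast_mem, hmul,
    mul_sup_span_singleton_eq_left hco (isNorm_of_mem_withNorm hI').natCast_mem
      (isNorm_of_mem_withNorm hJ').natCast_mem]

theorem exists_mul_eq_of_coprime {n k : ℕ} (h : n.Coprime k) {I : NormedIdeal u b m}
    (hI : I ∈ withNorm u b m (n * k)) :
    ∃ J ∈ withNorm u b m n, ∃ K ∈ withNorm u b m k, J * K = I := by
  have hn := isNorm_of_mem_withNorm hI
  have hcop : (n * k).Coprime m := mem_withNorm.1 hI ▸ I.coprime
  refine ⟨mk _ n (hn.sup_span h) hcop.coprime_mul_right, mem_withNorm.2 rfl,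
    mk _ k ((mul_comm n k ▸ hn).sup_span h.symm) hcop.coprime_mul_left, mem_withNorm.2 rfl,
    ideal_injective ?_⟩
  exact sup_span_singleton_mul_sup_span_singleton h.cast (by simpa using hn.natCast_mem)

theorem sum_withNorm_mul {R : Type*} [CommSemiring R] (ψ : NormedIdeal u b m →* R) {n k : ℕ}
    (h : n.Coprime k) : ∑ I ∈ withNorm u b m (n * k), ψ I =
      (∑ I ∈ withNorm u b m n, ψ I) * ∑ I ∈ withNorm u b m k, ψ I := by
  rw [Finset.sum_mul_sum, ← Finset.sum_product']
  symm
  refine Finset.sum_nbij (fun x ↦ x.1 * x.2) ?_ ?_ ?_ fun x _ ↦ (map_mul ψ x.1 x.2).symm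
  · rintro ⟨I, J⟩ hx
    rw [Finset.mem_product, mem_withNorm, mem_withNorm] at hx
    rw [mem_withNorm, absNorm_mul, hx.1, hx.2]
  · rintro ⟨I, J⟩ hx ⟨I', J'⟩ hx' heq
    obtain ⟨hI, hJ⟩ := Finset.mem_product.1 hx
    obtain ⟨hI', hJ'⟩ := Finset.mem_product.1 hx'
    refine Prod.ext (eq_of_mul_eq_mul_of_coprime h hI hI' hJ hJ' heq)
      (eq_of_mul_eq_mul_of_coprime h.symm hJ hJ' hI hI' ?_)
    simpa only [mul_comm] using heq
  · intro I hI
    obtain ⟨J, hJ, K, hK, rfl⟩ := exists_mul_eq_of_coprime h hI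
    exact ⟨(J, K), Finset.mem_product.2 ⟨hJ, hK⟩, rfl⟩

end NormedIdeal

end QuadraticOrder

/-! ### Euler products -/

section EulerFactor

variable {c : ℕ → ℂ} {x : ℝ}

theorem norm_add_two_le_of_norm_le_mul_pow (hx : 0 ≤ x)
    (hc : ∀ k, ‖c k‖ ≤ ((k / 2 + 1) * 2 : ℕ) * x ^ k) (k : ℕ) :
    ‖c (k + 2)‖ ≤ 4 * x ^ 2 * (2 * x) ^ k := by
  have hk : (k + 2) / 2 + 1 ≤ 2 * 2 ^ k := by have := Nat.lt_two_pow_self (n := k); omega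
  calc ‖c (k + 2)‖ ≤ (2 * 2 ^ k * 2 : ℕ) * x ^ (k + 2) := by
        refine (hc _).trans ?_
        gcongr
    _ = 4 * x ^ 2 * (2 * x) ^ k := by push_cast; ring

theorem norm_tsum_add_two_le (hx : 0 ≤ x) (hx' : x ≤ 1 / 11)
    (hc : ∀ k, ‖c k‖ ≤ ((k / 2 + 1) * 2 : ℕ) * x ^ k) : ‖∑' k, c (k + 2)‖ ≤ 5 * x ^ 2 := by
  have hgeom := (hasSum_geometric_of_lt_one (r := 2 * x) (by positivity) (by linarith)).mul_left
    (4 * x ^ 2)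
  have hinv : (1 - 2 * x)⁻¹ ≤ 5 / 4 := by
    rw [inv_le_comm₀ (by linarith) (by norm_num)]
    linarith
  calc ‖∑' k, c (k + 2)‖ ≤ 4 * x ^ 2 * (1 - 2 * x)⁻¹ :=
        tsum_of_norm_bounded hgeom (norm_add_two_le_of_norm_le_mul_pow hx hc)
    _ ≤ 4 * x ^ 2 * (5 / 4) := by gcongr
    _ = 5 * x ^ 2 := by ring

theorem tsum_eq_one_add (hx : 0 ≤ x) (hx' : x ≤ 1 / 11) (h0 : c 0 = 1)
    (hc : ∀ k, ‖c k‖ ≤ ((k / 2 + 1) * 2 : ℕ) * x ^ k) :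
    ∑' k, c k = 1 + (c 1 + ∑' k, c (k + 2)) := by
  have hgeom := (summable_geometric_of_lt_one (r := 2 * x) (by positivity) (by linarith)).mul_left
    (4 * x ^ 2)
  have hsum : Summable c := (summable_nat_add_iff 2).1
    (.of_norm_bounded hgeom (norm_add_two_le_of_norm_le_mul_pow hx hc))
  rw [← hsum.sum_add_tsum_nat_add 2, Finset.sum_range_succ, Finset.sum_range_one, h0, add_assoc]

theorem norm_one_add_tsum_add_two_le (hx : 0 ≤ x) (hx' : x ≤ 1 / 11)
    (hc : ∀ k, ‖c k‖ ≤ ((k / 2 + 1) * 2 : ℕ) * x ^ k) : ‖c 1 + ∑' k, c (k + 2)‖ ≤ 3 * x := by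
  have hone : ‖c 1‖ ≤ 2 * x := by simpa using hc 1
  have htail := norm_tsum_add_two_le hx hx' hc
  have hadd := norm_add_le (c 1) (∑' k, c (k + 2))
  nlinarith

theorem tsum_ne_zero_of_norm_le (hx : 0 ≤ x) (hx' : x ≤ 1 / 11) (h0 : c 0 = 1)
    (hc : ∀ k, ‖c k‖ ≤ ((k / 2 + 1) * 2 : ℕ) * x ^ k) : ∑' k, c k ≠ 0 := by
  rw [tsum_eq_one_add hx hx' h0 hc]
  intro h
  have hle := norm_one_add_tsum_add_two_le hx hx' hc
  rw [← neg_eq_of_add_eq_zero_right h, norm_neg, norm_one] at hle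
  linarith

theorem norm_log_tsum_sub_le (hx : 0 ≤ x) (hx' : x ≤ 1 / 11) (h0 : c 0 = 1)
    (hc : ∀ k, ‖c k‖ ≤ ((k / 2 + 1) * 2 : ℕ) * x ^ k) :
    ‖Complex.log (∑' k, c k) - c 1‖ ≤ 12 * x ^ 2 := by
  have hz := norm_one_add_tsum_add_two_le hx hx' hc
  have htail := norm_tsum_add_two_le hx hx' hc
  rw [tsum_eq_one_add hx hx' h0 hc]
  set r := ∑' k, c (k + 2)
  have hinv : (1 - ‖c 1 + r‖)⁻¹ ≤ 11 / 8 := by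
    rw [inv_le_comm₀ (by linarith) (by norm_num)]
    linarith
  calc ‖Complex.log (1 + (c 1 + r)) - c 1‖
      = ‖(Complex.log (1 + (c 1 + r)) - (c 1 + r)) + r‖ := by ring_nf
    _ ≤ ‖c 1 + r‖ ^ 2 * (1 - ‖c 1 + r‖)⁻¹ / 2 + 5 * x ^ 2 :=
        (norm_add_le _ _).trans
          (add_le_add (Complex.norm_log_one_add_sub_self_le (by linarith)) htail)
    _ ≤ (3 * x) ^ 2 * (11 / 8) / 2 + 5 * x ^ 2 := by
        have := inv_nonneg.2 (show 0 ≤ 1 - ‖c 1 + r‖ by linarith)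
        gcongr
    _ ≤ 12 * x ^ 2 := by nlinarith [sq_nonneg x]

end EulerFactor

namespace QuadraticOrder.NormedIdeal

variable {u b : ℤ} {m : ℕ}

theorem hasSum_sum_withNorm [hD : Fact (b ^ 2 + 4 * u < 0)] {E : Type*} [NormedAddCommGroup E]
    [CompleteSpace E] {f : NormedIdeal u b m → E} {a : E} (h : HasSum f a) :
    HasSum (fun n ↦ ∑ I ∈ withNorm u b m n, f I) a := by
  refine (h.tsum_fiberwise absNorm).congr_fun fun n ↦ ?_
  have hfiber : absNorm ⁻¹' {n} = (withNorm u b m n : Set (NormedIdeal u b m)) := by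
    ext
    simp
  rw [hfiber, Finset.tsum_subtype']

-- The factor 210 forces `p ≥ 11`, which makes the local Euler factors at `p` close to `1`.
theorem eleven_le_of_coprime (hm : 210 ∣ m) {p : ℕ} (hp : p.Prime) (h : p.Coprime m) : 11 ≤ p := by
  have hp210 : ¬ p ∣ 210 := fun hdvd ↦ hp.coprime_iff_not_dvd.1 h (hdvd.trans hm)
  by_contra! hlt
  interval_cases p <;> revert hp hp210 <;> decide

theorem not_dvd_discr_of_coprime (hm : (b ^ 2 + 4 * u).natAbs ∣ m) {p : ℕ} (hp : p.Prime)
    (h : p.Coprime m) : ¬ (p : ℤ) ∣ b ^ 2 + 4 * u :=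
  fun hdvd ↦ hp.coprime_iff_not_dvd.1 h ((Int.natCast_dvd.1 hdvd).trans hm)

theorem rpow_neg_le_inv {p : ℕ} (hp : 0 < p) {s : ℝ} (hs : 1 < s) : (p : ℝ) ^ (-s) ≤ (p : ℝ)⁻¹ := by
  rw [← Real.rpow_neg_one]
  exact Real.rpow_le_rpow_of_exponent_le (by exact_mod_cast hp) (by linarith)

theorem rpow_neg_le_of_coprime (hm : 210 ∣ m) {s : ℝ} (hs : 1 < s) {p : ℕ} (hp : p.Prime)
    (hpm : p.Coprime m) : (p : ℝ) ^ (-s) ≤ 1 / 11 := by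
  have h11 : (11 : ℝ) ≤ p := mod_cast eleven_le_of_coprime hm hp hpm
  refine (rpow_neg_le_inv hp.pos hs).trans ?_
  rw [one_div]
  gcongr

variable [hD : Fact (b ^ 2 + 4 * u < 0)] (χ : idealClassGroup u b m →* ℂ) {s : ℝ}

theorem norm_sum_weight_prime_pow_le {p : ℕ} (hp : p.Prime) (hpD : ¬ (p : ℤ) ∣ b ^ 2 + 4 * u)
    (s : ℝ) (k : ℕ) :
    ‖∑ I ∈ withNorm u b m (p ^ k), weight χ s I‖ ≤
      ((k / 2 + 1) * 2 : ℕ) * ((p : ℝ) ^ (-s)) ^ k := by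
  have hI : ∀ I ∈ withNorm u b m (p ^ k), ‖weight χ s I‖ ≤ ((p : ℝ) ^ (-s)) ^ k := fun I hI ↦ by
    rw [norm_weight, mem_withNorm.1 hI, Nat.cast_pow, Real.rpow_pow_comm (Nat.cast_nonneg _)]
  calc ‖∑ I ∈ withNorm u b m (p ^ k), weight χ s I‖
      ≤ (withNorm u b m (p ^ k)).card * ((p : ℝ) ^ (-s)) ^ k := by
        rw [← nsmul_eq_mul, ← Finset.sum_const]
        exact norm_sum_le_of_le _ hI
    _ ≤ _ := by
        gcongr
        exact card_withNorm_prime_pow_le hp hpD k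

/-- The local factor at `p` of the Euler product of `lSeries χ s` over the rational primes. -/
noncomputable def eulerFactor (s : ℝ) (p : Nat.Primes) : ℂ :=
  ∑' e : ℕ, ∑ I ∈ withNorm u b m (p ^ e), weight χ s I

theorem hasProd_eulerFactor (hm1 : 1 < m) (hs : 1 < s) :
    HasProd (eulerFactor χ s) (lSeries χ s) := by
  have hsum := summable_weight hm1 χ hs
  rw [lSeries, ← (hasSum_sum_withNorm hsum.hasSum).tsum_eq]
  refine EulerProduct.eulerProduct_hasProd (f := fun n ↦ ∑ I ∈ withNorm u b m n, weight χ s I)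
    (by simp [withNorm_one]) (fun h ↦ sum_withNorm_mul _ h) ?_ (by simp [withNorm_zero])
  exact .of_nonneg_of_le (fun _ ↦ norm_nonneg _) (fun n ↦ norm_sum_le _ _)
    (hasSum_sum_withNorm hsum.norm.hasSum).summable

theorem sum_withNorm_prime_pow_eq_zero {p : ℕ} (hp : ¬ p.Coprime m) (ψ : NormedIdeal u b m → ℂ)
    {e : ℕ} (he : e ≠ 0) : ∑ I ∈ withNorm u b m (p ^ e), ψ I = 0 := by
  rw [withNorm_eq_empty_of_not_coprime, Finset.sum_empty]
  rwa [Nat.coprime_pow_left_iff (Nat.pos_of_ne_zero he)]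

theorem eulerFactor_of_not_coprime {p : Nat.Primes} (hp : ¬ (p : ℕ).Coprime m) (s : ℝ) :
    eulerFactor χ s p = 1 := by
  rw [eulerFactor, tsum_eq_single 0 fun e ↦ sum_withNorm_prime_pow_eq_zero hp _]
  simp [withNorm_one]

theorem eulerFactor_ne_zero (hm : 210 * (b ^ 2 + 4 * u).natAbs ∣ m) (hs : 1 < s)
    (p : Nat.Primes) : eulerFactor χ s p ≠ 0 := by
  by_cases hp : (p : ℕ).Coprime m
  · have hx := rpow_neg_le_of_coprime ((dvd_mul_right _ _).trans hm) hs p.2 hp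
    have hpD := not_dvd_discr_of_coprime ((dvd_mul_left _ _).trans hm) p.2 hp
    exact tsum_ne_zero_of_norm_le (by positivity) hx (by simp [withNorm_one])
      (norm_sum_weight_prime_pow_le χ p.2 hpD s)
  · rw [eulerFactor_of_not_coprime χ hp]
    exact one_ne_zero

theorem norm_log_eulerFactor_sub_le (hm : 210 * (b ^ 2 + 4 * u).natAbs ∣ m) (hs : 1 < s)
    (p : Nat.Primes) :
    ‖Complex.log (eulerFactor χ s p) - ∑ I ∈ withNorm u b m p, weight χ s I‖ ≤
      12 * (p : ℝ) ^ (-2 : ℝ) := by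
  by_cases hp : (p : ℕ).Coprime m
  · have hx := rpow_neg_le_of_coprime ((dvd_mul_right _ _).trans hm) hs p.2 hp
    have hpD := not_dvd_discr_of_coprime ((dvd_mul_left _ _).trans hm) p.2 hp
    have hlog := norm_log_tsum_sub_le (by positivity) hx (by simp [withNorm_one])
      (norm_sum_weight_prime_pow_le χ p.2 hpD s)
    rw [pow_one] at hlog
    have hsq : (((p : ℕ) : ℝ)⁻¹) ^ 2 = ((p : ℕ) : ℝ) ^ (-2 : ℝ) := by
      rw [Real.rpow_neg (Nat.cast_nonneg _), Real.rpow_two, inv_pow]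
    refine hlog.trans (mul_le_mul_of_nonneg_left (le_of_le_of_eq ?_ hsq) (by norm_num))
    exact pow_le_pow_left₀ (by positivity) (rpow_neg_le_inv p.2.pos hs) 2
  · have hzero := sum_withNorm_prime_pow_eq_zero hp (weight χ s) one_ne_zero
    rw [pow_one] at hzero
    rw [eulerFactor_of_not_coprime χ hp, hzero, Complex.log_one, sub_zero, norm_zero]
    positivity

theorem norm_sum_weight_prime_le (hm : (b ^ 2 + 4 * u).natAbs ∣ m) (s : ℝ) {p : ℕ}
    (hp : p.Prime) : ‖∑ I ∈ withNorm u b m p, weight χ s I‖ ≤ 2 * (p : ℝ) ^ (-s) := by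
  by_cases hpm : p.Coprime m
  · simpa using norm_sum_weight_prime_pow_le χ hp (not_dvd_discr_of_coprime hm hp hpm) s 1
  · rw [withNorm_eq_empty_of_not_coprime hpm, Finset.sum_empty, norm_zero]
    positivity

/-- The part of `lSeries χ s` supported on the ideals of prime norm. -/
noncomputable def primeSeries (s : ℝ) : ℂ :=
  ∑' p : Nat.Primes, ∑ I ∈ withNorm u b m p, weight χ s I

theorem summable_sum_weight_prime (hm : (b ^ 2 + 4 * u).natAbs ∣ m) (hs : 1 < s) :
    Summable fun p : Nat.Primes ↦ ∑ I ∈ withNorm u b m p, weight χ s I :=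
  .of_norm_bounded ((Nat.Primes.summable_rpow.2 (by linarith)).mul_left 2)
    fun p ↦ norm_sum_weight_prime_le χ hm s p.2

theorem summable_log_eulerFactor (hm : 210 * (b ^ 2 + 4 * u).natAbs ∣ m) (hs : 1 < s) :
    Summable fun p : Nat.Primes ↦ Complex.log (eulerFactor χ s p) := by
  have hsub : Summable fun p : Nat.Primes ↦
      Complex.log (eulerFactor χ s p) - ∑ I ∈ withNorm u b m p, weight χ s I :=
    .of_norm_bounded ((Nat.Primes.summable_rpow.2 (by norm_num)).mul_left 12)
      (norm_log_eulerFactor_sub_le χ hm hs)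
  simpa using hsub.add (summable_sum_weight_prime χ ((dvd_mul_left _ _).trans hm) hs)

theorem lSeries_eq_exp (hm1 : 1 < m) (hm : 210 * (b ^ 2 + 4 * u).natAbs ∣ m) (hs : 1 < s) :
    lSeries χ s = Complex.exp (∑' p : Nat.Primes, Complex.log (eulerFactor χ s p)) :=
  (hasProd_eulerFactor χ hm1 hs).unique <| (summable_log_eulerFactor χ hm hs).hasSum.cexp.congr_fun
    fun p ↦ (Complex.exp_log (eulerFactor_ne_zero χ hm hs p)).symm

theorem lSeries_ne_zero (hm1 : 1 < m) (hm : 210 * (b ^ 2 + 4 * u).natAbs ∣ m) (hs : 1 < s) :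
    lSeries χ s ≠ 0 :=
  lSeries_eq_exp χ hm1 hm hs ▸ Complex.exp_ne_zero _

theorem isBigO_log_norm_lSeries_sub (hm1 : 1 < m) (hm : 210 * (b ^ 2 + 4 * u).natAbs ∣ m) :
    (fun s ↦ Real.log ‖lSeries χ s‖ - (primeSeries χ s).re) =O[𝓝[>] 1] (1 : ℝ → ℝ) := by
  refine .of_bound (12 * ∑' p : Nat.Primes, (p : ℝ) ^ (-2 : ℝ)) ?_
  filter_upwards [self_mem_nhdsWithin] with s hs
  rw [lSeries_eq_exp χ hm1 hm hs, Complex.norm_exp, Real.log_exp, ← Complex.sub_re, primeSeries,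
    ← (summable_log_eulerFactor χ hm hs).tsum_sub
      (summable_sum_weight_prime χ ((dvd_mul_left _ _).trans hm) hs),
    Pi.one_apply, norm_one, mul_one]
  exact (Complex.abs_re_le_norm _).trans <| tsum_of_norm_bounded
    ((Nat.Primes.summable_rpow.2 (by norm_num)).hasSum.mul_left 12)
    (norm_log_eulerFactor_sub_le χ hm hs)

end QuadraticOrder.NormedIdeal

/-! ### Classes of ideals without prime factors `p ≡ -1` -/

theorem exists_character_of_notMem {G : Type*} [CommGroup G] [Finite G] {H : Subgroup G} {g : G}
    (hg : g ∉ H) : ∃ χ : G →* ℂ, (∀ x ∈ H, χ x = 1) ∧ χ g ≠ 1 := by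
  obtain ⟨φ, hφ⟩ := CommGroup.exists_apply_ne_one_of_hasEnoughRootsOfUnity (G ⧸ H) ℂ
    (mt (QuotientGroup.eq_one_iff g).1 hg)
  refine ⟨(Units.coeHom ℂ).comp (φ.comp (QuotientGroup.mk' H)), fun x hx ↦ ?_, fun h ↦ hφ ?_⟩
  · simp [(QuotientGroup.eq_one_iff x).2 hx]
  · exact Units.val_eq_one.1 h

theorem exists_log_norm_le_of_isBigO {α E F : Type*} [NormedAddCommGroup E]
    [SeminormedAddCommGroup F] {l : Filter α} {f : α → E} {g : α → F} (h : f =O[l] g)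
    (hf : ∀ᶠ x in l, f x ≠ 0) :
    ∃ C, ∀ᶠ x in l, Real.log ‖f x‖ ≤ Real.log ‖g x‖ + C := by
  obtain ⟨C, hC, hbound⟩ := h.exists_pos
  refine ⟨Real.log C, ?_⟩
  filter_upwards [hf, hbound.bound] with x hx hle
  have hg : ‖g x‖ ≠ 0 := fun h0 ↦ hx (by simpa [h0] using hle)
  rw [← Real.log_mul hg hC.ne', mul_comm]
  exact Real.log_le_log (norm_pos_iff.2 hx) hle

theorem not_eventually_neg_log_le_primeResidueSum_sub {q M : ℕ} [NeZero q] [NeZero M]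
    {K : ℝ} (hK : K ≤ q.totient) (hK0 : 0 < K) (C : ℝ) :
    ¬ ∀ᶠ s in 𝓝[>] 1, -Real.log (s - 1) ≤
      K * (primeResidueSum (-1 : ZMod q) s - primeResidueSum (-1 : ZMod M) s) + C := by
  intro h
  obtain ⟨C₁, hC₁⟩ := (primeResidueSum.add_log_isBigO_one (q := q) isUnit_one.neg).bound
  obtain ⟨C₂, hC₂⟩ := (primeResidueSum.add_log_isBigO_one (q := M) isUnit_one.neg).bound
  have hlim : Tendsto (fun s : ℝ ↦ -Real.log (s - 1)) (𝓝[>] 1) atTop := by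
    refine tendsto_neg_atBot_atTop.comp (Real.tendsto_log_nhdsGT_zero.comp
      (tendsto_nhdsWithin_iff.2 ⟨?_, ?_⟩))
    · exact ((continuous_sub_right (1 : ℝ)).tendsto' _ _ (sub_self 1)).mono_left
        nhdsWithin_le_nhds
    · filter_upwards [self_mem_nhdsWithin] with s hs
      exact sub_pos.2 (Set.mem_Ioi.1 hs)
  have hq : K * (q.totient : ℝ)⁻¹ ≤ 1 := by
    rw [← div_eq_mul_inv]
    exact div_le_one_of_le₀ hK (Nat.cast_nonneg _)
  have hM : 0 < K * (M.totient : ℝ)⁻¹ :=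
    mul_pos hK0 (inv_pos.2 (Nat.cast_pos.2 (Nat.totient_pos.2 (NeZero.pos M))))
  obtain ⟨s, hs, h₁, h₂, hlog, hlarge⟩ := (h.and (hC₁.and (hC₂.and ((hlim.eventually_ge_atTop 0).and
    ((hlim.const_mul_atTop hM).eventually_gt_atTop (K * C₁ + K * C₂ + C)))))).exists
  rw [Pi.one_apply, norm_one, mul_one, Real.norm_eq_abs] at h₁ h₂
  have hupper := mul_le_mul_of_nonneg_left (abs_le.1 h₁).2 hK0.le
  have hlower := mul_le_mul_of_nonneg_left (abs_le.1 h₂).1 hK0.le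
  have hone := mul_le_mul_of_nonneg_right hq hlog
  linarith

namespace QuadraticOrder.NormedIdeal

variable {u b : ℤ} {m ℓ : ℕ} [hD : Fact (b ^ 2 + 4 * u < 0)]

variable (u b m ℓ) in
/-- The classes of the ideals whose norm has no prime divisor `p ≡ -1` modulo `ℓ`. -/
noncomputable def goodClasses : Subgroup (idealClassGroup u b m) where
  carrier := {g | ∃ I : NormedIdeal u b m, idealClass I = g ∧
    ∀ p : ℕ, p.Prime → p ∣ I.absNorm → ¬ ℓ ∣ p + 1}
  one_mem' := ⟨1, map_one idealClass, fun _ hp h ↦ (hp.not_dvd_one (absNorm_one ▸ h)).elim⟩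
  mul_mem' := by
    rintro _ _ ⟨I, rfl, hI⟩ ⟨J, rfl, hJ⟩
    refine ⟨I * J, map_mul idealClass I J, fun p hp h ↦ ?_⟩
    rw [absNorm_mul, hp.dvd_mul] at h
    exact h.elim (hI p hp) (hJ p hp)
  inv_mem' := by
    rintro _ ⟨I, rfl, hI⟩
    exact ⟨I.bar, idealClass_bar I, hI⟩

theorem idealClass_mem_goodClasses_of_prime {I : NormedIdeal u b m} (hI : I.absNorm.Prime)
    (h : ¬ ℓ ∣ I.absNorm + 1) : idealClass I ∈ goodClasses u b m ℓ :=
  ⟨I, rfl, fun _ hp hdvd ↦ (Nat.prime_dvd_prime_iff_eq hp hI).1 hdvd ▸ h⟩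

theorem sum_weight_eq_of_not_dvd {χ : idealClassGroup u b m →* ℂ}
    (hχ : ∀ g ∈ goodClasses u b m ℓ, χ g = 1) {p : ℕ} (hp : p.Prime) (h : ¬ ℓ ∣ p + 1) (s : ℝ) :
    ∑ I ∈ withNorm u b m p, weight χ s I = ∑ I ∈ withNorm u b m p, weight 1 s I := by
  refine Finset.sum_congr rfl fun I hI ↦ ?_
  obtain rfl := mem_withNorm.1 hI
  rw [weight_apply, weight_apply, hχ _ (idealClass_mem_goodClasses_of_prime hp h),
    MonoidHom.one_apply]

theorem norm_sum_weight_one_sub_le (hm : (b ^ 2 + 4 * u).natAbs ∣ m)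
    {χ : idealClassGroup u b m →* ℂ} (hχ : ∀ g ∈ goodClasses u b m ℓ, χ g = 1) (s : ℝ)
    (p : Nat.Primes) :
    ‖∑ I ∈ withNorm u b m p, weight 1 s I - ∑ I ∈ withNorm u b m p, weight χ s I‖ ≤
      4 * ((if ((p : ℕ) : ZMod ℓ) = -1 then ((p : ℕ) : ℝ) ^ (-s) else 0) -
        if ((p : ℕ) : ZMod (4 * (b ^ 2 + 4 * u).natAbs * ℓ)) = -1 then
          ((p : ℕ) : ℝ) ^ (-s) else 0) := by
  have hiff (q : ℕ) : ((p : ℕ) : ZMod q) = -1 ↔ q ∣ (p : ℕ) + 1 := by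
    rw [← ZMod.natCast_eq_zero_iff, Nat.cast_succ, eq_neg_iff_add_eq_zero]
  simp only [hiff]
  by_cases hM : 4 * (b ^ 2 + 4 * u).natAbs * ℓ ∣ (p : ℕ) + 1
  · rw [withNorm_eq_empty_of_four_mul_dvd_add_one p.2 ((dvd_mul_right _ _).trans hM), if_pos hM,
      if_pos ((dvd_mul_left _ _).trans hM)]
    simp
  rw [if_neg hM, sub_zero]
  split_ifs with hℓ
  · have h1 := norm_sum_weight_prime_le (1 : idealClassGroup u b m →* ℂ) hm s p.2
    have h2 := norm_sum_weight_prime_le χ hm s p.2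
    linarith [norm_sub_le (∑ I ∈ withNorm u b m p, weight 1 s I)
      (∑ I ∈ withNorm u b m p, weight χ s I)]
  · rw [sum_weight_eq_of_not_dvd hχ p.2 hℓ, sub_self, norm_zero, mul_zero]

theorem norm_primeSeries_one_sub_le (hm : (b ^ 2 + 4 * u).natAbs ∣ m)
    {χ : idealClassGroup u b m →* ℂ} (hχ : ∀ g ∈ goodClasses u b m ℓ, χ g = 1) {s : ℝ}
    (hs : 1 < s) :
    ‖primeSeries (1 : idealClassGroup u b m →* ℂ) s - primeSeries χ s‖ ≤
      4 * (primeResidueSum (-1 : ZMod ℓ) s -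
        primeResidueSum (-1 : ZMod (4 * (b ^ 2 + 4 * u).natAbs * ℓ)) s) := by
  rw [primeSeries, primeSeries, ← (summable_sum_weight_prime 1 hm hs).tsum_sub
    (summable_sum_weight_prime χ hm hs)]
  exact tsum_of_norm_bounded (((summable_primes_ite_rpow_neg _ hs).hasSum.sub
    (summable_primes_ite_rpow_neg _ hs).hasSum).mul_left 4) (norm_sum_weight_one_sub_le hm hχ s)

theorem exists_neg_log_le_of_forall_mem_goodClasses (hm1 : 1 < m)
    (hm : 210 * (b ^ 2 + 4 * u).natAbs ∣ m) {χ : idealClassGroup u b m →* ℂ} (hχ1 : χ ≠ 1)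
    (hχ : ∀ g ∈ goodClasses u b m ℓ, χ g = 1) :
    ∃ C, ∀ᶠ s in 𝓝[>] 1, -Real.log (s - 1) ≤ 4 * (primeResidueSum (-1 : ZMod ℓ) s -
      primeResidueSum (-1 : ZMod (4 * (b ^ 2 + 4 * u).natAbs * ℓ)) s) + C := by
  obtain ⟨C₁, hC₁⟩ := (isBigO_log_norm_lSeries_sub (1 : idealClassGroup u b m →* ℂ) hm1 hm).bound
  obtain ⟨C₂, hC₂⟩ := (isBigO_log_norm_lSeries_sub χ hm1 hm).bound
  obtain ⟨C₃, hC₃⟩ := exists_log_norm_le_of_isBigO (isBigO_inv_lSeries_one (u := u) (b := b) hm1)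
    (by filter_upwards [self_mem_nhdsWithin] with s hs using inv_ne_zero (sub_pos.2 hs).ne')
  obtain ⟨C₄, hC₄⟩ := exists_log_norm_le_of_isBigO (lSeries_isBigO_one hm1 hχ1)
    (by filter_upwards [self_mem_nhdsWithin] with s hs using lSeries_ne_zero χ hm1 hm hs)
  refine ⟨C₁ + C₂ + C₃ + C₄, ?_⟩
  filter_upwards [self_mem_nhdsWithin, hC₁, hC₂, hC₃, hC₄] with s hs h₁ h₂ h₃ h₄
  rw [Pi.one_apply, norm_one, mul_one, Real.norm_eq_abs] at h₁ h₂
  rw [Real.norm_of_nonneg (inv_nonneg.2 (sub_pos.2 hs).le), Real.log_inv] at h₃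
  rw [Pi.one_apply, norm_one, Real.log_one] at h₄
  have hre := (Complex.re_le_norm _).trans
    (norm_primeSeries_one_sub_le ((dvd_mul_left _ _).trans hm) hχ hs)
  rw [Complex.sub_re] at hre
  linarith [(abs_le.1 h₁).2, (abs_le.1 h₂).1]

theorem goodClasses_eq_top (hm1 : 1 < m) (hm : 210 * (b ^ 2 + 4 * u).natAbs ∣ m)
    (hℓ : 4 ≤ ℓ.totient) : goodClasses u b m ℓ = ⊤ := by
  refine Subgroup.eq_top_iff' _ |>.2 fun g ↦ by_contra fun hg ↦ ?_
  obtain ⟨χ, hχ, hχg⟩ := exists_character_of_notMem hg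
  obtain ⟨C, hC⟩ := exists_neg_log_le_of_forall_mem_goodClasses hm1 hm
    (ne_of_apply_ne (· g) (by simpa using hχg)) hχ
  have hℓ0 : NeZero ℓ := ⟨by rintro rfl; simp at hℓ⟩
  have hD0 : NeZero (b ^ 2 + 4 * u).natAbs := ⟨Int.natAbs_ne_zero.2 hD.out.ne⟩
  exact not_eventually_neg_log_le_primeResidueSum_sub (by exact_mod_cast hℓ) (by norm_num) C hC

end QuadraticOrder.NormedIdeal

/-! ### Binary quadratic forms -/

theorem span_pair_mul_span_pair_sub {R : Type*} [CommRing R] {a b c w x y z : R}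
    (hw : w * (b - w) = a * c) (h : a * x + b * y + c * z = 1) :
    Ideal.span {a, w} * Ideal.span {a, b - w} = Ideal.span {a} := by
  rw [Ideal.span_pair_mul_span_pair]
  refine le_antisymm (Ideal.span_le.2 ?_) ((Ideal.span_singleton_le_iff_mem _).2 ?_)
  · rintro _ (rfl | rfl | rfl | rfl) <;> rw [SetLike.mem_coe, Ideal.mem_span_singleton]
    · exact dvd_mul_right _ _
    · exact dvd_mul_right _ _
    · exact dvd_mul_left _ _
    · exact hw ▸ dvd_mul_right _ _
  · have ha : a = x * (a * a) + y * (a * (b - w) + w * a) + z * (w * (b - w)) := by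
      linear_combination -a * h - z * hw
    refine Set.mem_of_eq_of_mem ha (Ideal.add_mem _ (Ideal.add_mem _ (Ideal.mul_mem_left _ _ ?_)
      (Ideal.mul_mem_left _ _ (Ideal.add_mem _ ?_ ?_))) (Ideal.mul_mem_left _ _ ?_)) <;>
    exact Ideal.subset_span (by simp)

namespace QuadraticOrder

variable {a : ℕ} {b c : ℤ}

/-- The ideal `(a, ω)` attached to the form `a x² + b x y + c y²`, in the order generated by a
root `ω` of `ω² = b ω - a c`; the norm of `x a + y ω` is `a` times the value at `(x, y)`. -/
def formIdeal (a : ℕ) (b c : ℤ) : Ideal (QuadraticOrder (-(a * c)) b) :=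
  Ideal.span {(a : QuadraticOrder (-(a * c)) b), ⟨0, 1⟩}

theorem exists_norm_eq_of_mem_formIdeal {z : QuadraticOrder (-(a * c)) b}
    (h : z ∈ formIdeal a b c) :
    ∃ x y : ℤ, z.norm = a * (a * x ^ 2 + b * x * y + c * y ^ 2) := by
  obtain ⟨v, w, rfl⟩ := Ideal.mem_span_pair.1 h
  set z := v * (a : QuadraticOrder (-(a * c)) b) + w * ⟨0, 1⟩ with hz
  have hre : z.re = a * (v.re - c * w.im) := by
    simp [hz]; ring
  refine ⟨v.re - c * w.im, z.im, ?_⟩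
  rw [QuadraticAlgebra.norm_def, hre]
  ring

theorem conj_formIdeal : conj (formIdeal a b c) =
    Ideal.span {(a : QuadraticOrder (-(a * c)) b), (b : QuadraticOrder (-(a * c)) b) - ⟨0, 1⟩} := by
  have hstar : star (⟨0, 1⟩ : QuadraticOrder (-(a * c)) b) =
      (b : QuadraticOrder (-(a * c)) b) - ⟨0, 1⟩ := by
    ext <;> simp
  rw [formIdeal, Ideal.span_insert, conj_sup, conj_span_singleton, conj_span_singleton, hstar,
    star_natCast, ← Ideal.span_insert]

theorem isNorm_formIdeal {x y z : ℤ} (ha : 0 < a) (h : a * x + b * y + c * z = 1) :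
    IsNorm (formIdeal a b c) a where
  pos := ha
  mul_conj := by
    rw [conj_formIdeal, formIdeal]
    refine span_pair_mul_span_pair_sub (c := (c : QuadraticOrder (-(a * c)) b))
      (x := (x : QuadraticOrder (-(a * c)) b)) (y := (y : QuadraticOrder (-(a * c)) b))
      (z := (z : QuadraticOrder (-(a * c)) b)) (by ext <;> simp) ?_
    rw [← Int.cast_natCast a]
    exact_mod_cast congrArg (Int.cast : ℤ → QuadraticOrder (-(a * c)) b) h

end QuadraticOrder

open QuadraticOrder NormedIdeal in
theorem exists_form_eq_natCast_of_coprime {a : ℕ} {b c : ℤ} {m ℓ : ℕ}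
    (hdisc : b ^ 2 - 4 * a * c < 0) (hm1 : 1 < m)
    (hm : 210 * (b ^ 2 - 4 * a * c).natAbs ∣ m) (ham : a.Coprime m) (hℓ : 4 ≤ ℓ.totient) :
    ∃ (n : ℕ) (x y : ℤ), a * x ^ 2 + b * x * y + c * y ^ 2 = n ∧ n.Coprime m ∧
      ∀ p : ℕ, p.Prime → p ∣ n → ¬ ℓ ∣ p + 1 := by
  have hD : b ^ 2 + 4 * (-(a * c)) = b ^ 2 - 4 * a * c := by ring
  have : Fact (b ^ 2 + 4 * (-(a * c)) < 0) := ⟨hD ▸ hdisc⟩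
  have ha : 0 < a := Nat.pos_of_ne_zero fun h ↦ by
    rw [h, Nat.cast_zero, mul_zero, zero_mul, sub_zero] at hdisc
    exact (sq_nonneg b).not_gt hdisc
  have haD : IsCoprime (a : ℤ) (b ^ 2 - 4 * a * c) :=
    (Nat.isCoprime_iff_coprime.2 ham).of_isCoprime_of_dvd_right
      (Int.natAbs_dvd.1 (Int.natCast_dvd_natCast.2 ((Dvd.intro_left _ rfl).trans hm)))
  obtain ⟨r, s, hrs⟩ := haD
  have hA : IsNorm (formIdeal a b c) a :=
    isNorm_formIdeal (x := r - 4 * s * c) (y := s * b) (z := 0) ha (by linear_combination hrs)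
  set A : NormedIdeal (-(a * c)) b m := NormedIdeal.mk _ a hA ham
  obtain ⟨I, hI, hgood⟩ : (idealClass A)⁻¹ ∈ goodClasses (-(a * c)) b m ℓ :=
    goodClasses_eq_top hm1 (hD ▸ hm) hℓ ▸ Subgroup.mem_top _
  obtain ⟨α, hα⟩ := idealClass_eq_inv_iff.1 hI
  have hαA : α ∈ formIdeal a b c :=
    Ideal.mul_le_right (hα ▸ Ideal.mem_span_singleton_self α : α ∈ I.ideal * A.ideal)
  obtain ⟨x, y, hxy⟩ := exists_norm_eq_of_mem_formIdeal hαA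
  have hnorm : α.norm = ((I.absNorm * a : ℕ) : ℤ) := (I.isNorm.mul hA).norm_eq hα
  rw [hxy, mul_comm, Nat.cast_mul] at hnorm
  exact ⟨I.absNorm, x, y, mul_right_cancel₀ (Nat.cast_ne_zero.2 ha.ne') hnorm, I.coprime, hgood⟩

theorem not_dvd_form_of_prime {R : Type*} [CommRing R] {a b c x y q : R} (hq : Prime q)
    (h : ¬ (q ∣ a ∧ q ∣ b ∧ q ∣ c)) (hx : q ∣ x ↔ q ∣ a ∧ ¬ q ∣ c) (hy : q ∣ y ↔ ¬ q ∣ a) :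
    ¬ q ∣ a * x ^ 2 + b * x * y + c * y ^ 2 := by
  intro hdvd
  by_cases ha : q ∣ a
  · have hy' : ¬ q ∣ y := fun h ↦ hy.1 h ha
    by_cases hc : q ∣ c
    · have hx' : ¬ q ∣ x := fun h ↦ (hx.1 h).2 hc
      have hbxy : q ∣ b * x * y :=
        (dvd_add_right (ha.mul_right _)).1 ((dvd_add_left (hc.mul_right _)).1 hdvd)
      have hb := (hq.dvd_or_dvd ((hq.dvd_or_dvd hbxy).resolve_right hy')).resolve_right hx'
      exact h ⟨ha, hb, hc⟩
    · have hx' : q ∣ x := hx.2 ⟨ha, hc⟩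
      have hcy : q ∣ c * y ^ 2 :=
        (dvd_add_right ((ha.mul_right _).add ((hx'.mul_left _).mul_right _))).1 hdvd
      exact (hq.dvd_or_dvd hcy).elim hc fun h ↦ hy' (hq.dvd_of_dvd_pow h)
  · have hy' : q ∣ y := hy.2 ha
    have hax : q ∣ a * x ^ 2 := (dvd_add_left (hy'.mul_left _)).1
      ((dvd_add_left ((hy'.pow two_ne_zero).mul_left _)).1 hdvd)
    exact (hq.dvd_or_dvd hax).elim ha fun h ↦ ha (hx.1 (hq.dvd_of_dvd_pow h)).1

theorem exists_coprime_forall_dvd_iff (s : Finset ℕ) (hs : ∀ p ∈ s, p.Prime) {P Q : ℕ → Prop}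
    (hPQ : ∀ p ∈ s, P p → ¬ Q p) :
    ∃ x y : ℕ, x.Coprime y ∧ ∀ p ∈ s, (p ∣ x ↔ P p) ∧ (p ∣ y ↔ Q p) := by
  classical
  have hdvd (T : ℕ → Prop) (p : ℕ) (hp : p ∈ s) : p ∣ ∏ q ∈ s with T q, q ↔ T p := by
    have hmem : p ∈ (∏ q ∈ s with T q, q).primeFactors ↔ p ∈ s.filter T := by
      rw [Nat.primeFactors_prod fun q hq ↦ hs q (Finset.mem_of_mem_filter q hq)]
    rwa [Nat.mem_primeFactors_of_ne_zero (Finset.prod_ne_zero_iff.2 fun q hq ↦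
      (hs q (Finset.mem_of_mem_filter q hq)).ne_zero), and_iff_right (hs p hp), Finset.mem_filter,
      and_iff_right hp] at hmem
  refine ⟨∏ q ∈ s with P q, q, ∏ q ∈ s with Q q, q,
    Nat.Coprime.prod_left fun p hp ↦ Nat.Coprime.prod_right fun q hq ↦ ?_,
    fun p hp ↦ ⟨hdvd P p hp, hdvd Q p hp⟩⟩
  rw [Finset.mem_filter] at hp hq
  refine (Nat.coprime_primes (hs p hp.1) (hs q hq.1)).2 ?_
  rintro rfl
  exact hPQ p hp.1 hp.2 hq.2

theorem exists_isCoprime_isCoprime_form {a b c : ℤ} (h : Int.gcd a (Int.gcd b c) = 1) {m : ℕ}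
    (hm : m ≠ 0) : ∃ x y : ℤ, IsCoprime x y ∧
      IsCoprime (a * x ^ 2 + b * x * y + c * y ^ 2) (m : ℤ) := by
  obtain ⟨x, y, hxy, hdvd⟩ := exists_coprime_forall_dvd_iff m.primeFactors
    (fun _ ↦ Nat.prime_of_mem_primeFactors) (P := fun p ↦ (p : ℤ) ∣ a ∧ ¬ (p : ℤ) ∣ c)
    (Q := fun p ↦ ¬ (p : ℤ) ∣ a) fun _ _ hP hQ ↦ hQ hP.1
  refine ⟨x, y, Nat.isCoprime_iff_coprime.2 hxy, Int.isCoprime_iff_gcd_eq_one.2 <|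
    Nat.coprime_of_dvd fun q hq hq_form hq_m ↦ ?_⟩
  rw [Int.natAbs_natCast] at hq_m
  obtain ⟨hx, hy⟩ := hdvd q (Nat.mem_primeFactors.2 ⟨hq, hq_m, hm⟩)
  rw [← Int.natCast_dvd_natCast] at hx hy
  refine not_dvd_form_of_prime (Nat.prime_iff_prime_int.1 hq) ?_ hx hy (Int.natCast_dvd.2 hq_form)
  rintro ⟨ha, hb, hc⟩
  have hq_gcd := Int.dvd_coe_gcd ha (Int.dvd_coe_gcd hb hc)
  rw [h] at hq_gcd
  exact hq.not_dvd_one (Int.natCast_dvd_natCast.1 hq_gcd)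

theorem exists_form_eq_of_isCoprime {R : Type*} [CommRing R] {x y : R} (h : IsCoprime x y)
    (a b c : R) : ∃ b' c' : R,
      b' ^ 2 - 4 * (a * x ^ 2 + b * x * y + c * y ^ 2) * c' = b ^ 2 - 4 * a * c ∧
      ∀ v w, ∃ X Y, a * X ^ 2 + b * X * Y + c * Y ^ 2 =
        (a * x ^ 2 + b * x * y + c * y ^ 2) * v ^ 2 + b' * v * w + c' * w ^ 2 := by
  obtain ⟨s, r, hsr⟩ := h
  refine ⟨2 * a * x * (-r) + b * (x * s + y * (-r)) + 2 * c * y * s,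
    a * (-r) ^ 2 + b * (-r) * s + c * s ^ 2, ?_,
    fun v w ↦ ⟨x * v - r * w, y * v + s * w, by ring⟩⟩
  linear_combination (b ^ 2 - 4 * a * c) * (s * x + r * y + 1) * hsr

theorem form_pos {R : Type*} [CommRing R] [LinearOrder R] [IsStrictOrderedRing R] {a b c x y : R}
    (ha : 0 < a) (hdisc : b ^ 2 - 4 * a * c < 0) (hxy : x ≠ 0 ∨ y ≠ 0) :
    0 < a * x ^ 2 + b * x * y + c * y ^ 2 := by
  have hsq : 4 * a * (a * x ^ 2 + b * x * y + c * y ^ 2) =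
      (2 * a * x + b * y) ^ 2 + -(b ^ 2 - 4 * a * c) * y ^ 2 := by ring
  refine pos_of_mul_pos_right (hsq ▸ ?_) (by positivity : 0 ≤ 4 * a)
  have hD : 0 < -(b ^ 2 - 4 * a * c) := neg_pos.2 hdisc
  by_cases hy : y = 0
  · have hx : x ≠ 0 := hxy.resolve_right (not_not.2 hy)
    have : 0 < (2 * a * x) ^ 2 := by positivity
    simpa [hy] using this
  · positivity

theorem exists_form_isCoprime_of_pos {ℓ m : ℕ} {a b c : ℤ} (hℓ : 4 ≤ ℓ.totient) (hm : m ≠ 0)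
    (hprim : Int.gcd a (Int.gcd b c) = 1) (hpos : 0 < a) (hdisc : b ^ 2 - 4 * a * c < 0) :
    ∃ x y : ℤ, IsCoprime (a * x ^ 2 + b * x * y + c * y ^ 2) (m : ℤ) ∧
      ∀ p : ℕ, p.Prime → (p : ℤ) ∣ a * x ^ 2 + b * x * y + c * y ^ 2 → ¬ ℓ ∣ p + 1 := by
  set M := 210 * (b ^ 2 - 4 * a * c).natAbs * m with hM
  have hD : (b ^ 2 - 4 * a * c).natAbs ≠ 0 := Int.natAbs_ne_zero.2 hdisc.ne
  have hM1 : 1 < M := by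
    have := Nat.pos_of_ne_zero (mul_ne_zero hD hm)
    rw [hM, mul_assoc]
    omega
  obtain ⟨x, y, hxy, hcop⟩ := exists_isCoprime_isCoprime_form hprim (m := M) (by omega)
  obtain ⟨b', c', hdisc', hform⟩ := exists_form_eq_of_isCoprime hxy a b c
  have hpos' := form_pos hpos hdisc hxy.ne_zero_or_ne_zero
  lift a * x ^ 2 + b * x * y + c * y ^ 2 to ℕ using hpos'.le with a'
  obtain ⟨n, v, w, hn, hnM, hgood⟩ := exists_form_eq_natCast_of_coprime (hdisc' ▸ hdisc) hM1
    (hdisc' ▸ dvd_mul_right _ _) (Nat.isCoprime_iff_coprime.1 hcop) hℓ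
  obtain ⟨X, Y, hXY⟩ := hform v w
  refine ⟨X, Y, ?_, fun p hp hdvd ↦ hgood p hp ?_⟩
  · rw [hXY, hn, Nat.isCoprime_iff_coprime]
    exact hnM.coprime_dvd_right (dvd_mul_left _ _)
  · rwa [hXY, hn, Int.natCast_dvd_natCast] at hdvd

theorem binary_form_represents_good_integer_general {ℓ m : ℕ} {a b c : ℤ} (hℓ : 4 ≤ ℓ.totient)
    (hm : m ≠ 0) (hprim : Int.gcd a (Int.gcd b c) = 1) (hdisc : b ^ 2 - 4 * a * c < 0) :
    ∃ x y : ℤ, IsCoprime (a * x ^ 2 + b * x * y + c * y ^ 2) (m : ℤ) ∧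
      ∀ p : ℕ, p.Prime → (p : ℤ) ∣ a * x ^ 2 + b * x * y + c * y ^ 2 → ¬ ℓ ∣ p + 1 := by
  have ha : a ≠ 0 := by
    rintro rfl
    nlinarith [sq_nonneg b]
  obtain ha | ha := ha.lt_or_gt
  · obtain ⟨x, y, hcop, hgood⟩ := exists_form_isCoprime_of_pos (a := -a) (b := -b) (c := -c) hℓ hm
      (by simpa using hprim) (neg_pos.2 ha) (by linarith)
    have hneg : -a * x ^ 2 + -b * x * y + -c * y ^ 2 = -(a * x ^ 2 + b * x * y + c * y ^ 2) := by
      ring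
    rw [hneg] at hcop hgood
    exact ⟨x, y, IsCoprime.neg_left_iff _ _ |>.1 hcop, fun p hp h ↦ hgood p hp (dvd_neg.2 h)⟩
  · exact exists_form_isCoprime_of_pos hℓ hm hprim ha hdisc

/-- A primitive positive definite integral binary quadratic form represents an
integer all of whose prime divisors `p` satisfy `p ≢ 0` and `p ≢ -1 (mod ℓ)`, for any prime
`ℓ ≥ 5`. -/
theorem binary_form_represents_good_integer
    (ℓ : ℕ) (hℓ : ℓ.Prime) (hℓ5 : 5 ≤ ℓ)
    (a b c : ℤ)
    (hprim : Int.gcd a (Int.gcd b c) = 1)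
    (hpos : 0 < a) (hdisc : b ^ 2 - 4 * a * c < 0) :
    ∃ x y : ℤ, ∀ p : ℕ, p.Prime → (p : ℤ) ∣ (a * x ^ 2 + b * x * y + c * y ^ 2) →
      ¬ ((p : ℤ) ≡ 0 [ZMOD (ℓ : ℤ)]) ∧ ¬ ((p : ℤ) ≡ -1 [ZMOD (ℓ : ℤ)]) := by
  obtain ⟨x, y, hcop, hgood⟩ := binary_form_represents_good_integer_general
    (by rw [Nat.totient_prime hℓ]; omega) hℓ.ne_zero hprim hdisc
  refine ⟨x, y, fun p hp hdvd ↦ ⟨fun hzero ↦ ?_, fun hneg ↦ hgood p hp hdvd ?_⟩⟩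
  · have hℓp : (ℓ : ℤ) ∣ p := Int.modEq_zero_iff_dvd.1 hzero
    exact (Nat.prime_iff_prime_int.1 hℓ).not_isUnit
      (hcop.isUnit_of_dvd' (hℓp.trans hdvd) dvd_rfl)
  · have hℓp : (ℓ : ℤ) ∣ p - -1 := hneg.symm.dvd
    rw [sub_neg_eq_add] at hℓp
    exact_mod_cast hℓp
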